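/- Let α ∈ (0,1) with α ≠ 1/2. There exists a constant C_α > 0, depending only on α, such that for every f ∈ L²(0,1) one has C_α⁻¹ N_α(I^α f) ≤ ‖f‖_{L²(0,1)} ≤ C_α N_α(I^α f); that is, the map f ↦ I^α f is a norm-equivalence between L²(0,1) and its image equipped with the H^α(0,1)-norm. -/

import Mathlib

/-!
Write `U = powKer α * g`, where `powKer α t = t ^ (α - 1)` for `t > 0` and `0` otherwise, and `g` is
`f` extended by zero outside `(0, 1]`. Up to the factor `Γ(α)⁻¹` this is the fractional integral of
`f`. All estimates are proved for `ℝ≥0∞`-valued integrals and converted to real integrals at the end.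

*Kernel differences.* The kernel `powKer β` is not integrable, but
`diffKer β h = powKer β - powKer β (· - h)` is. Comparing the step `h` with the step `1 / (2|ξ|)`,
for which the character factor equals `2`, gives
`|𝓕 (diffKer β h) ξ| ≤ M |ξ|^(-β) |1 - exp (-2πihξ)|` (`fourier_diffKer_le`). This is the only Fourier
information about the kernel that is needed; its transform is never computed.

*Upper bound.* By Plancherel, integrating `‖U - U(· - h)‖²` against `h^(-1-2α)` yields
`gag α univ U ≤ C ‖g‖²` (`diffEnergy_rlConv_le`). The `L²` part on `(0, 1]` follows from the Hardy
inequality `∫ |U|² x^(-2α) ≤ C ‖g‖²` (`hardyE_rlConv_le`), since the weight is at least `1` there.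

*Lower bound.* Let `v` be `U` restricted to `(0, 1]`, extended by zero to the left and reflected
evenly at `1` (`evenExt`). The Gagliardo energy of `v` on the line is at most the energy of `U` on
`(0, 1]` plus a multiple of `∫ |U|² x^(-2α)`. For `α ≠ 1/2` the latter is controlled by the
`H^α(0,1)` norm of `U` (`hardyE_le`): compare `U x` with `U (t x)`, average over
`t ∈ (1/4, 1/2)`, and absorb, which is legitimate because the integral is already known to be finite.
On the other hand the convolution `powKer (1 - α) * powKer α` is a Beta constant `B` times the
Heaviside function (Abel inversion, `integral_powKer_rlConv`), so for `x < 1` the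
convolution of `diffKer (1 - α) ε` with `v` at `x` equals `B ∫_{x-ε}^x g`; the values of `v`
beyond `1` play no role by causality. The multiplier bound for `1 - α` estimates its `L²` norm by
`ε` times the square root of the energy of `v`. Dividing by `ε`, Lebesgue differentiation and Fatou's
lemma give `‖g‖² ≤ C` times that energy (`lintegral_sq_le_diffEnergy`).
-/

open MeasureTheory Set Filter

/-- Riemann–Liouville fractional integral `I^γ f` on `(0,1)` (complex-valued),
with the convention `I⁰ f = f`. -/
noncomputable def fracInt (γ : ℝ) (f : ℝ → ℂ) (x : ℝ) : ℂ :=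
  if γ = 0 then f x
  else ((Real.Gamma γ)⁻¹ : ℝ) • ∫ p in (0:ℝ)..x, (((x - p) ^ (γ - 1) : ℝ) : ℂ) * f p

/-- `f` is square integrable (and a.e. strongly measurable) on `(0,1)`: `f ∈ L²(0,1)`. -/
def SqIntOn (f : ℝ → ℂ) : Prop :=
  MeasureTheory.AEStronglyMeasurable f (MeasureTheory.volume.restrict (Set.Ioc (0:ℝ) 1)) ∧
  MeasureTheory.IntegrableOn (fun x => ‖f x‖ ^ 2) (Set.Ioc (0:ℝ) 1)

/-- `(u, w)` lies in the graph of `A = (d/dx) D^α`:  `u` is absolutely continuous on `[0,1]`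
with `u' = I^α w` a.e., `u(1) = 0`, and `w ∈ L²(0,1)`; then `A u = w`. -/
def InGraphA (α : ℝ) (u w : ℝ → ℂ) : Prop :=
  u 1 = 0 ∧ SqIntOn w ∧
  IntervalIntegrable (fracInt α w) MeasureTheory.volume 0 1 ∧
  ∀ x ∈ Set.Icc (0:ℝ) 1, u x = u 0 + ∫ t in (0:ℝ)..x, fracInt α w t

/-- Square of the `L²(0,1)` norm. -/
noncomputable def L2normSq (f : ℝ → ℂ) : ℝ := ∫ x in (0:ℝ)..1, ‖f x‖ ^ 2

/-- Square of the Gagliardo seminorm of order `s` on `(0,1)`. -/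
noncomputable def sobSeminormSq (s : ℝ) (u : ℝ → ℂ) : ℝ :=
  ∫ x in (0:ℝ)..1, ∫ y in (0:ℝ)..1, ‖u x - u y‖ ^ 2 / |x - y| ^ (1 + 2 * s)

/-- Square of the fractional Sobolev `H^s(0,1)` norm `N_s(u)`. -/
noncomputable def sobNormSq (s : ℝ) (u : ℝ → ℂ) : ℝ :=
  L2normSq u + sobSeminormSq s u

open scoped FourierTransform ENNReal SchwartzMap Topology

/-! ### Fourier transform of the kernel difference, and Plancherel -/

theorem lintegral_comp_mul_pos (f : ℝ → ℝ≥0∞) {a : ℝ} (ha : 0 < a) :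
    ∫⁻ x, f (a * x) = ENNReal.ofReal a⁻¹ * ∫⁻ x, f x := by
  have := lintegral_map_equiv (μ := volume) f (Homeomorph.mulLeft₀ a ha.ne').toMeasurableEquiv
  have h2 : Measure.map (Homeomorph.mulLeft₀ a ha.ne').toMeasurableEquiv volume
      = ENNReal.ofReal a⁻¹ • (volume : Measure ℝ) := by
    have := Real.map_volume_mul_left ha.ne'
    rwa [abs_of_pos (inv_pos.2 ha)] at this
  rw [h2, lintegral_smul_measure] at this
  simpa using this.symm

theorem fourier_sub_shift {F : ℝ → ℂ} (hF : Integrable F) (h ξ : ℝ) :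
    𝓕 (fun x => F x - F (x - h)) ξ = (1 - (𝐞 (-(h * ξ)) : ℂ)) * 𝓕 F ξ := by
  have h1 : 𝓕 (fun x => F (x - h)) ξ = (𝐞 (-(h * ξ)) : ℂ) * 𝓕 F ξ := by
    have := congrFun (VectorFourier.fourierIntegral_comp_add_right 𝐞 (volume : Measure ℝ)
      (innerₗ ℝ) F (-h)) ξ
    simp only [Function.comp_def, ← sub_eq_add_neg] at this
    refine Eq.trans this ?_
    simp only [Circle.smul_def, smul_eq_mul]
    congr 3
    simp [mul_comm]
  have h2 : 𝓕 (fun x => F x - F (x - h)) ξ = 𝓕 F ξ - 𝓕 (fun x => F (x - h)) ξ := by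
    simp only [Real.fourier_real_eq]
    rw [← integral_sub]
    · simp only [smul_sub]
    · exact (Real.fourierIntegral_convergent_iff (f := F) ξ).2 hF |>.congr
        (by simp [mul_comm])
    · exact (Real.fourierIntegral_convergent_iff ξ).2 (hF.comp_sub_right h) |>.congr
        (by simp [mul_comm])
  rw [h2, h1]; ring

/-- The causal power kernel `t ^ (β - 1)` on `t > 0`, extended by zero; the normalisation `Γ(β)⁻¹`
is left out. -/
noncomputable def powKer (β t : ℝ) : ℝ := if 0 < t then t ^ (β - 1) else 0

/-- The increment of `powKer β` over a step `h`; unlike `powKer β` itself it is integrable on the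
line for `0 < β < 1`. -/
noncomputable def diffKer (β h t : ℝ) : ℝ := powKer β t - powKer β (t - h)

theorem measurable_powKer (β : ℝ) : Measurable (powKer β) := by
  unfold powKer
  exact Measurable.ite measurableSet_Ioi (by fun_prop) measurable_const

theorem measurable_diffKer (β h : ℝ) : Measurable (diffKer β h) :=
  (measurable_powKer β).sub ((measurable_powKer β).comp (measurable_id.sub_const h))

theorem powKer_nonneg (β t : ℝ) : 0 ≤ powKer β t := by
  unfold powKer; split_ifs with h
  · positivity
  · exact le_rfl

theorem integrableOn_powKer {β : ℝ} (h0 : 0 < β) (a b : ℝ) : IntegrableOn (powKer β) (Icc a b) := by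
  have : IntegrableOn (powKer β) (Ioc 0 (max 0 b)) := by
    have := (intervalIntegral.intervalIntegrable_rpow' (a := 0) (b := max 0 b) (r := β - 1) (by linarith)).1
    refine this.congr_fun ?_ measurableSet_Ioc
    intro x hx
    simp [powKer, hx.1]
  have h2 : IntegrableOn (powKer β) (Iic 0) := by
    refine (integrableOn_zero).congr_fun ?_ measurableSet_Iic
    intro x hx
    simp only [mem_Iic] at hx
    simp [powKer, hx.not_gt]
  refine (h2.union this).mono_set ?_
  intro x hx
  by_cases hx0 : x ≤ 0
  · exact Or.inl hx0
  · exact Or.inr ⟨not_le.1 hx0, hx.2.trans (le_max_right _ _)⟩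

theorem integrable_diffKer {β h : ℝ} (h0 : 0 < β) (h1 : β < 1) (hh : 0 < h) :
    Integrable (diffKer β h) := by
  have ht : IntegrableOn (diffKer β h) (Ioi h) := by
    have : IntegrableOn (fun t => β * t ^ (β - 1) - β * (t - h) ^ (β - 1)) (Ioi h) := by
      -- On `(h, ∞)` the integrand is the nonpositive derivative of `t ^ β - (t - h) ^ β`, which tends to `0`.
      refine integrableOn_Ioi_deriv_of_nonpos (g := fun t => t ^ β - (t - h) ^ β) (l := 0) ?_ ?_ ?_ ?_
      · refine ContinuousAt.continuousWithinAt ?_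
        refine (continuousAt_id.rpow_const (Or.inr h0.le)).sub
          ((continuousAt_id.sub continuousAt_const).rpow_const (Or.inr h0.le))
      · intro x hx
        have hx : h < x := hx
        have a := Real.hasDerivAt_rpow_const (x := x) (p := β) (Or.inl (by linarith))
        have b := (Real.hasDerivAt_rpow_const (x := x - h) (p := β) (Or.inl (by linarith))).comp_sub_const x h
        exact a.sub b
      · intro x hx
        have hx : h < x := hx
        have := Real.rpow_le_rpow_of_nonpos (x := x - h) (y := x) (z := β - 1) (by linarith) (by linarith) (by linarith)
        nlinarith
      · have hlim : Tendsto (fun t : ℝ => h * t ^ (β - 1)) atTop (𝓝 0) := by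
          have := (tendsto_rpow_neg_atTop (y := 1 - β) (by linarith)).const_mul h
          simpa using this
        refine squeeze_zero' ?_ ?_ hlim
        · filter_upwards [eventually_gt_atTop h] with t ht
          have := Real.rpow_le_rpow (x := t - h) (y := t) (z := β) (by linarith) (by linarith) h0.le
          linarith
        · filter_upwards [eventually_gt_atTop h] with t ht
          have htp : 0 < t := by linarith
          have e1 : (t - h) ^ β = t ^ β * (1 - h / t) ^ β := by
            rw [← Real.mul_rpow htp.le (by rw [sub_nonneg, div_le_one htp]; linarith)]
            congr 1; field_simp
          have e2 : 1 - h / t ≤ (1 - h / t) ^ β := by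
            have := Real.rpow_le_rpow_of_exponent_ge (x := 1 - h / t) (y := 1) (z := β)
              (by rw [sub_pos, div_lt_one htp]; linarith) (by have := div_pos hh htp; linarith) h1.le
            simpa using this
          have e3 : t ^ (β - 1) = t ^ β / t := by rw [Real.rpow_sub_one htp.ne']
          have : t ^ β * (1 - h/t) ≤ t ^ β * (1 - h / t) ^ β := by gcongr
          rw [e1, e3]
          have e4 : t ^ β * (1 - h/t) = t ^ β - h * (t ^ β / t) := by field_simp
          linarith
    refine IntegrableOn.congr_fun (f := fun t => β⁻¹ * (β * t ^ (β - 1) - β * (t - h) ^ (β - 1)))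
      (Integrable.const_mul this β⁻¹) ?_ measurableSet_Ioi
    intro t ht'
    have ht' : h < t := ht'
    simp only [diffKer, powKer, if_pos (hh.trans ht'), if_pos (sub_pos.2 ht')]
    field_simp
  have hm : IntegrableOn (diffKer β h) (Icc 0 h) := by
    refine (integrableOn_powKer h0 0 h).congr_fun ?_ measurableSet_Icc
    intro t ht'
    simp [diffKer, powKer, ht'.2.not_gt]
  have hn : IntegrableOn (diffKer β h) (Iio 0) := by
    refine (integrableOn_zero).congr_fun ?_ measurableSet_Iio
    intro x hx
    have hx : x < 0 := hx
    simp [diffKer, powKer, hx.le.not_gt, (hx.trans hh).le.not_gt]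
  rw [← integrableOn_univ]
  refine ((hn.union hm).union ht).mono_set ?_
  intro x _
  by_cases a : x < 0
  · exact Or.inl (Or.inl a)
  by_cases b : x ≤ h
  · exact Or.inl (Or.inr ⟨not_lt.1 a, b⟩)
  · exact Or.inr (not_le.1 b)

theorem diffKer_scale (β : ℝ) {h : ℝ} (hh : 0 < h) (t : ℝ) :
    diffKer β h t = h ^ (β - 1) * diffKer β 1 (h⁻¹ * t) := by
  have key : ∀ s : ℝ, powKer β s = h ^ (β - 1) * powKer β (h⁻¹ * s) := by
    intro s
    unfold powKer
    by_cases hs : 0 < s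
    · have : 0 < h⁻¹ * s := by positivity
      rw [if_pos hs, if_pos this, ← Real.mul_rpow hh.le this.le]
      congr 1; field_simp
    · have : ¬ 0 < h⁻¹ * s := by
        rw [not_lt] at *; exact mul_nonpos_of_nonneg_of_nonpos (by positivity) hs
      rw [if_neg hs, if_neg this, mul_zero]
  unfold diffKer
  rw [key t, key (t - h), mul_sub]
  field_simp

theorem integral_norm_diffKer (β : ℝ) {h : ℝ} (hh : 0 < h) :
    ∫ t, ‖(diffKer β h t : ℂ)‖ = h ^ β * ∫ t, ‖diffKer β 1 t‖ := by
  simp_rw [Complex.norm_real, diffKer_scale β hh, norm_mul]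
  rw [integral_const_mul, Measure.integral_comp_mul_left (fun t => ‖diffKer β 1 t‖), smul_eq_mul,
    ← mul_assoc, inv_inv, abs_of_pos hh, Real.norm_of_nonneg (by positivity)]
  congr 1
  rw [Real.rpow_sub_one hh.ne']; field_simp

/-- Multiplier bound for the kernel difference. Since `F - F(· - k)` has transform
`(1 - 𝐞 (-(k * ξ))) * 𝓕 F ξ` and double differences are symmetric in the two steps, the step `h` can be
traded for `k = 1 / (2|ξ|)`, whose `L¹` bound `k ^ β * I` is explicit by scaling. -/
theorem fourier_diffKer_le {β : ℝ} (h0 : 0 < β) (h1 : β < 1) :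
    ∃ M : ℝ, 0 < M ∧ ∀ h > 0, ∀ ξ ≠ 0,
      ‖𝓕 (fun t => (diffKer β h t : ℂ)) ξ‖ ≤ M * |ξ| ^ (-β) * ‖1 - (𝐞 (-(h * ξ)) : ℂ)‖ := by
  set I := ∫ t, ‖diffKer β 1 t‖ with hI
  have hIn : 0 ≤ I := integral_nonneg fun _ => norm_nonneg _
  refine ⟨I + 1, by linarith, fun h hh ξ hξ => ?_⟩
  have hξ' : 0 < |ξ| := abs_pos.2 hξ
  -- For this step the character `𝐞 (-(k * ξ))` equals `-1`.
  set k := (2 * |ξ|)⁻¹ with hk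
  have hk0 : 0 < k := by positivity
  have h_int : ∀ h > 0, Integrable (fun t => (diffKer β h t : ℂ)) := fun h hh =>
    (integrable_diffKer h0 h1 hh).ofReal
  have e1 : (1 - (𝐞 (-(k * ξ)) : ℂ)) * 𝓕 (fun t => (diffKer β h t : ℂ)) ξ
      = (1 - (𝐞 (-(h * ξ)) : ℂ)) * 𝓕 (fun t => (diffKer β k t : ℂ)) ξ := by
    rw [← fourier_sub_shift (h_int h hh), ← fourier_sub_shift (h_int k hk0)]
    refine congrFun (congrArg _ (funext fun t => ?_)) ξ
    unfold diffKer
    push_cast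
    rw [sub_right_comm t k h]; ring
  have e2 : (𝐞 (-(k * ξ)) : ℂ) = -1 := by
    rw [Real.fourierChar_apply]
    rcases lt_or_gt_of_ne hξ with hneg | hpos
    · have : 2 * Real.pi * -(k * ξ) = Real.pi := by
        rw [hk, abs_of_neg hneg]; field_simp
      rw [this, Complex.exp_pi_mul_I]
    · have : 2 * Real.pi * -(k * ξ) = -Real.pi := by
        rw [hk, abs_of_pos hpos]; field_simp
      rw [this]; push_cast
      rw [neg_mul, Complex.exp_neg, Complex.exp_pi_mul_I]; norm_num
  have e3 : ‖𝓕 (fun t => (diffKer β k t : ℂ)) ξ‖ ≤ k ^ β * I := by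
    rw [← integral_norm_diffKer β hk0]
    exact VectorFourier.norm_fourierIntegral_le_integral_norm _ _ _ _ _
  have e4 : k ^ β ≤ |ξ| ^ (-β) := by
    rw [hk, Real.inv_rpow (by positivity), Real.rpow_neg hξ'.le]
    gcongr
    linarith
  have e5 := congrArg norm e1
  rw [e2, norm_mul, norm_mul] at e5
  norm_num at e5
  have hE := norm_nonneg (1 - (𝐞 (-(h * ξ)) : ℂ))
  have hp : 0 ≤ |ξ| ^ (-β) := by positivity
  have e6 : ‖𝓕 (fun t => (diffKer β k t : ℂ)) ξ‖ ≤ |ξ| ^ (-β) * (I + 1) :=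
    e3.trans (mul_le_mul e4 (by linarith) hIn hp)
  have e7 := mul_le_mul_of_nonneg_left e6 hE
  have := norm_nonneg (𝓕 (fun t => (diffKer β h t : ℂ)) ξ)
  rw [mul_comm] at e7
  nlinarith

/-- The `L²` Fourier transform of an integrable square-integrable function agrees almost everywhere
with the Fourier integral: test against smooth compactly supported functions and pass through tempered
distributions. -/
theorem fourier_toLp_ae {F : ℝ → ℂ} (h1 : Integrable F) (h2 : MemLp F 2) :
    (𝓕 (h2.toLp F) : Lp ℂ 2 (volume : Measure ℝ)) =ᵐ[volume] 𝓕 F := by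
  have hcont : Continuous (𝓕 F) :=
    VectorFourier.fourierIntegral_continuous Real.continuous_fourierChar
      (by exact continuous_inner) h1
  refine ae_eq_of_integral_contDiff_smul_eq
    ((Lp.memLp (𝓕 (h2.toLp F))).locallyIntegrable (by norm_num)) hcont.locallyIntegrable ?_
  intro g hg hgs
  let g' : ℝ → ℂ := fun x => (g x : ℂ)
  have hg' : ContDiff ℝ ((⊤ : ℕ∞) : WithTop ℕ∞) g' := Complex.ofRealCLM.contDiff.comp hg
  have hgs' : HasCompactSupport g' := hgs.comp_left (g := fun x : ℝ => (x:ℂ)) (by simp)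
  let G : 𝓢(ℝ, ℂ) := hgs'.toSchwartzMap hg'
  have key := congrArg (fun T => T G) (Lp.fourier_toTemperedDistribution_eq (h2.toLp F))
  simp only [TemperedDistribution.fourier_apply, Lp.toTemperedDistribution_apply] at key
  have e1 : ∀ x, G x = (g x : ℂ) := fun x => rfl
  have : ∫ x, g x • (𝓕 F) x = ∫ x, (𝓕 G) x • F x := by
    have := VectorFourier.integral_fourierIntegral_smul_eq_flip (μ := volume) (ν := volume)
      (L := innerₗ ℝ) (f := G) (g := F)
      Real.continuous_fourierChar continuous_inner G.integrable h1
    rw [SchwartzMap.fourier_coe]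
    simp only [flip_innerₗ, e1, smul_eq_mul] at this
    simp only [Complex.real_smul, smul_eq_mul]
    exact this.symm
  rw [this]
  have e2 : ∫ x, (𝓕 G) x • (h2.toLp F) x = ∫ x, (𝓕 G) x • F x :=
    integral_congr_ae (by filter_upwards [h2.coeFn_toLp] with x hx; rw [hx])
  rw [← e2, key]
  simp [e1]

theorem plancherel {F : ℝ → ℂ} (h1 : Integrable F) (h2 : MemLp F 2) :
    ∫⁻ ξ, ‖𝓕 F ξ‖ₑ ^ 2 = ∫⁻ x, ‖F x‖ₑ ^ 2 := by
  have a : eLpNorm (𝓕 F) 2 volume = eLpNorm F 2 volume := by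
    rw [← eLpNorm_congr_ae (fourier_toLp_ae h1 h2), ← eLpNorm_congr_ae h2.coeFn_toLp,
      ← Lp.enorm_def, ← Lp.enorm_def, ← ofReal_norm, ← ofReal_norm, Lp.norm_fourier_eq]
  have b : ∀ G : ℝ → ℂ, (eLpNorm G 2 volume) ^ 2 = ∫⁻ x, ‖G x‖ₑ ^ 2 := fun G => by
    simpa using eLpNorm_nnreal_pow_eq_lintegral (f := G) (p := 2) (μ := volume) (by norm_num)
  rw [← b, ← b, a]

/-! ### Convolutions on the Fourier side -/

theorem lintegral_mul_sq_le {f g : ℝ → ℝ≥0∞} {μ : Measure ℝ} (hf : AEMeasurable f μ) (hg : AEMeasurable g μ) :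
    (∫⁻ x, f x * g x ∂μ) ^ 2 ≤ (∫⁻ x, f x ^ 2 ∂μ) * ∫⁻ x, g x ^ 2 ∂μ := by
  have := ENNReal.lintegral_mul_le_Lp_mul_Lq μ Real.HolderConjugate.two_two hf hg
  have h2 := pow_le_pow_left' this 2
  refine h2.trans (le_of_eq ?_)
  rw [mul_pow, ← ENNReal.rpow_mul_natCast, ← ENNReal.rpow_mul_natCast]
  norm_num

/-- Cauchy–Schwarz with respect to the measure with density `a`. -/
theorem lintegral_weighted_sq_le {a b : ℝ → ℝ≥0∞} {μ : Measure ℝ} (ha : AEMeasurable a μ) (hb : AEMeasurable b μ) :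
    (∫⁻ x, a x * b x ∂μ) ^ 2 ≤ (∫⁻ x, a x ∂μ) * ∫⁻ x, a x * b x ^ 2 ∂μ := by
  have e : ∀ t : ℝ≥0∞, (t ^ (1/2:ℝ)) ^ 2 = t := fun t => by
    rw [← ENNReal.rpow_mul_natCast]; norm_num
  have := lintegral_mul_sq_le (μ := μ) (f := fun x => a x ^ (1/2:ℝ)) (g := fun x => a x ^ (1/2:ℝ) * b x)
    (ha.pow_const _) ((ha.pow_const _).mul hb)
  simpa only [mul_pow, e, ← mul_assoc, ← pow_two] using this

theorem integrable_conv {K : ℝ → ℝ} (hK : Integrable K) {g : ℝ → ℂ} (h1 : Integrable g) :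
    Integrable (fun x => ∫ t, (K (x - t) : ℂ) * g t) := by
  have := h1.integrable_convolution (L := ContinuousLinearMap.mul ℂ ℂ) (hK.ofReal (𝕜 := ℂ))
  refine this.congr (Eventually.of_forall fun x => ?_)
  simp only [convolution, ContinuousLinearMap.mul_apply']
  exact integral_congr_ae (Eventually.of_forall fun t => mul_comm _ _)

/-- Young's inequality for an `L¹` kernel acting on `L²`. -/
theorem lintegral_conv_sq_le {K : ℝ → ℝ} (hKm : Measurable K) {g : ℝ → ℂ} (hg : Measurable g) :
    ∫⁻ x, ‖∫ t, (K (x - t) : ℂ) * g t‖ₑ ^ 2 ≤ (∫⁻ t, ‖K t‖ₑ) ^ 2 * ∫⁻ t, ‖g t‖ₑ ^ 2 := by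
  have b : ∀ x, ‖∫ t, (K (x - t) : ℂ) * g t‖ₑ ^ 2
      ≤ (∫⁻ t, ‖K t‖ₑ) * ∫⁻ t, ‖K (x - t)‖ₑ * ‖g t‖ₑ ^ 2 := by
    intro x
    have c : ‖∫ t, (K (x - t) : ℂ) * g t‖ₑ ≤ ∫⁻ t, ‖K (x - t)‖ₑ * ‖g t‖ₑ := by
      refine (enorm_integral_le_lintegral_enorm _).trans (le_of_eq ?_)
      refine lintegral_congr fun t => ?_
      rw [enorm_mul]; congr 1
      simp [enorm_eq_nnnorm]
    refine (pow_le_pow_left' c 2).trans ?_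
    refine (lintegral_weighted_sq_le (by fun_prop) (by fun_prop)).trans (le_of_eq ?_)
    rw [lintegral_sub_left_eq_self (fun t => ‖K t‖ₑ)]
  calc _ ≤ ∫⁻ x, (∫⁻ t, ‖K t‖ₑ) * ∫⁻ t, ‖K (x - t)‖ₑ * ‖g t‖ₑ ^ 2 := lintegral_mono b
    _ = (∫⁻ t, ‖K t‖ₑ) * ∫⁻ x, ∫⁻ t, ‖K (x - t)‖ₑ * ‖g t‖ₑ ^ 2 := by
        rw [lintegral_const_mul]
        exact Measurable.lintegral_prod_right' (f := fun p : ℝ × ℝ => ‖K (p.1 - p.2)‖ₑ * ‖g p.2‖ₑ ^ 2) (by fun_prop)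
    _ = (∫⁻ t, ‖K t‖ₑ) * ∫⁻ t, ∫⁻ x, ‖K (x - t)‖ₑ * ‖g t‖ₑ ^ 2 := by
        rw [lintegral_lintegral_swap]
        exact Measurable.aemeasurable (by fun_prop)
    _ = (∫⁻ t, ‖K t‖ₑ) * ∫⁻ t, (∫⁻ t, ‖K t‖ₑ) * ‖g t‖ₑ ^ 2 := by
        congr 1
        refine lintegral_congr fun t => ?_
        rw [lintegral_mul_const _ (by fun_prop), lintegral_sub_right_eq_self (fun t => ‖K t‖ₑ)]
    _ = _ := by
        rw [lintegral_const_mul _ (by fun_prop)]; ring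

theorem memLp_two_iff {F : ℝ → ℂ} (hF : AEStronglyMeasurable F volume) :
    MemLp F 2 ↔ ∫⁻ x, ‖F x‖ₑ ^ 2 < ∞ := by
  have b : (eLpNorm F 2 volume) ^ 2 = ∫⁻ x, ‖F x‖ₑ ^ 2 := by
    simpa using eLpNorm_nnreal_pow_eq_lintegral (f := F) (p := 2) (μ := volume) (by norm_num)
  rw [← b, MemLp, and_iff_right hF, ENNReal.pow_lt_top_iff]
  simp

theorem conv_plancherel {K : ℝ → ℝ} (hKm : Measurable K) (hK : Integrable K) {g : ℝ → ℂ}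
    (hg : Measurable g) (h1 : Integrable g) (h2 : ∫⁻ t, ‖g t‖ₑ ^ 2 < ∞) :
    ∫⁻ x, ‖∫ t, (K (x - t) : ℂ) * g t‖ₑ ^ 2
      = ∫⁻ ξ, ‖𝓕 (fun t => (K t : ℂ)) ξ‖ₑ ^ 2 * ‖𝓕 g ξ‖ₑ ^ 2 := by
  have hi := integrable_conv hK h1
  have hK' : Integrable (fun t => (K t : ℂ)) := hK.ofReal
  rw [← plancherel hi]
  · refine lintegral_congr fun ξ => ?_
    rw [← mul_pow, ← enorm_mul, mul_comm,
      ← Real.fourier_mul_convolution_eq h1 hK']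
    congr 2
    refine congrFun (congrArg _ (funext fun x => ?_)) ξ
    simp only [convolution, ContinuousLinearMap.mul_apply']
    exact integral_congr_ae (Eventually.of_forall fun t => mul_comm _ _)
  · rw [memLp_two_iff hi.aestronglyMeasurable]
    refine (lintegral_conv_sq_le hKm hg).trans_lt (ENNReal.mul_lt_top ?_ h2)
    exact ENNReal.pow_lt_top hK.2

/-! ### The Fourier symbol of the difference energy -/

/-- The Gagliardo weight `|r| ^ (-(1 + 2α))`. By the conventions for real powers its value at `r = 0`
is `0` (for `α ≠ -1/2`). -/
noncomputable def gagWt (α r : ℝ) : ℝ≥0∞ := ENNReal.ofReal (|r| ^ (-(1 + 2 * α)))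

theorem measurable_gagWt (α : ℝ) : Measurable (gagWt α) := by
  unfold gagWt; fun_prop

/-- The Fourier symbol of `diffEnergy α`, namely `∫_0^∞ |1 - exp (-2πihξ)|² h ^ (-(1 + 2α)) dh`. -/
noncomputable def symInt (α ξ : ℝ) : ℝ≥0∞ :=
  ∫⁻ h in Ioi 0, ‖1 - (𝐞 (-(h * ξ)) : ℂ)‖ₑ ^ 2 * gagWt α h

theorem enorm_one_sub_char_neg (x : ℝ) : ‖1 - (𝐞 (-x) : ℂ)‖ₑ = ‖1 - (𝐞 x : ℂ)‖ₑ := by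
  rw [enorm_eq_iff_norm_eq]
  have : 1 - (𝐞 (-x) : ℂ) = (starRingEnd ℂ) (1 - (𝐞 x : ℂ)) := by
    rw [AddChar.map_neg_eq_inv, Circle.coe_inv_eq_conj]; simp
  rw [this, Complex.norm_conj]

theorem enorm_one_sub_char_le (x : ℝ) : ‖1 - (𝐞 x : ℂ)‖ ≤ 2 * Real.pi * |x| := by
  rw [Real.fourierChar_apply, norm_sub_rev, mul_comm _ Complex.I]
  refine Real.norm_exp_I_mul_ofReal_sub_one_le.trans (le_of_eq ?_)
  rw [Real.norm_eq_abs, abs_mul, abs_of_pos (by positivity)]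

theorem symInt_eq (α : ℝ) {ξ : ℝ} (hξ : ξ ≠ 0) :
    symInt α ξ = ENNReal.ofReal (|ξ| ^ (2 * α)) * symInt α 1 := by
  have h0 : 0 < |ξ| := abs_pos.2 hξ
  have e1 : ∀ h : ℝ, ‖1 - (𝐞 (-(h * ξ)) : ℂ)‖ₑ = ‖1 - (𝐞 (-(|ξ| * h)) : ℂ)‖ₑ := by
    intro h
    rcases abs_cases ξ with ⟨h', _⟩ | ⟨h', _⟩
    · rw [h', mul_comm]
    · rw [h', enorm_one_sub_char_neg]; congr 4; ring
  have e2 : ∀ h : ℝ, gagWt α h = ENNReal.ofReal (|ξ| ^ (1 + 2 * α)) * gagWt α (|ξ| * h) := by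
    intro h
    unfold gagWt
    rw [← ENNReal.ofReal_mul (by positivity), abs_mul, abs_abs, Real.mul_rpow (by positivity) (by positivity),
      ← mul_assoc, ← Real.rpow_add h0]
    simp
  unfold symInt
  rw [← lintegral_indicator measurableSet_Ioi, ← lintegral_indicator measurableSet_Ioi]
  set Φ : ℝ → ℝ≥0∞ := (Ioi 0).indicator fun h => ‖1 - (𝐞 (-(h * 1)) : ℂ)‖ₑ ^ 2 * gagWt α h with hΦ
  have e3 : ∀ h, (Ioi 0).indicator (fun h => ‖1 - (𝐞 (-(h * ξ)) : ℂ)‖ₑ ^ 2 * gagWt α h) h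
      = ENNReal.ofReal (|ξ| ^ (1 + 2 * α)) * Φ (|ξ| * h) := by
    intro h
    by_cases hh : 0 < h
    · rw [hΦ, indicator_of_mem (mem_Ioi.2 hh), indicator_of_mem (mem_Ioi.2 (by positivity)), e1, e2 h,
        mul_one]
      ring
    · rw [hΦ, indicator_of_notMem (s := Ioi 0) (by simpa using hh), indicator_of_notMem, mul_zero]
      simp only [mem_Ioi, not_lt] at hh ⊢
      exact mul_nonpos_of_nonneg_of_nonpos h0.le hh
  simp_rw [e3]
  rw [lintegral_const_mul', lintegral_comp_mul_pos Φ h0, ← mul_assoc, ← ENNReal.ofReal_mul (by positivity)]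
  · congr 2
    rw [Real.rpow_add h0, Real.rpow_one]; field_simp
  · simp

theorem symInt_one_ne_top {α : ℝ} (h0 : 0 < α) (h1 : α < 1) : symInt α 1 ≠ ∞ := by
  have a : ∫⁻ h in Ioc 0 1, ‖1 - (𝐞 (-(h * 1)) : ℂ)‖ₑ ^ 2 * gagWt α h < ∞ := by
    have hi : IntegrableOn (fun h : ℝ => (2 * Real.pi) ^ 2 * h ^ (1 - 2 * α)) (Ioc 0 1) :=
      ((intervalIntegral.intervalIntegrable_rpow' (a := 0) (b := 1) (r := 1 - 2 * α)
        (by linarith)).1).const_mul _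
    refine lt_of_le_of_lt (setLIntegral_mono' measurableSet_Ioc fun h hh => ?_) hi.2
    have hh0 : 0 < h := hh.1
    have l := enorm_one_sub_char_le (-(h * 1))
    rw [abs_neg, mul_one, abs_of_pos hh0] at l
    rw [← ofReal_norm, ← ofReal_norm, gagWt, ← ENNReal.ofReal_pow (norm_nonneg _),
      ← ENNReal.ofReal_mul (by positivity)]
    refine ENNReal.ofReal_le_ofReal ?_
    rw [mul_one, Real.norm_of_nonneg (by positivity), abs_of_pos hh0]
    have : h ^ (1 - 2 * α) = h ^ 2 * h ^ (-(1 + 2 * α)) := by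
      rw [← Real.rpow_natCast, ← Real.rpow_add hh0]; congr 1; push_cast; ring
    show _ ≤ (2 * Real.pi) ^ 2 * h ^ (1 - 2 * α)
    rw [this, ← mul_assoc, ← mul_pow]
    gcongr
  have b : ∫⁻ h in Ioi 1, ‖1 - (𝐞 (-(h * 1)) : ℂ)‖ₑ ^ 2 * gagWt α h < ∞ := by
    have hi : IntegrableOn (fun h : ℝ => 4 * h ^ (-(1 + 2 * α))) (Ioi 1) :=
      (integrableOn_Ioi_rpow_of_lt (by linarith) one_pos).const_mul _
    refine lt_of_le_of_lt (setLIntegral_mono' measurableSet_Ioi fun h hh => ?_) hi.2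
    have hh0 : 0 < h := lt_trans one_pos hh
    have l : ‖1 - (𝐞 (-(h * 1)) : ℂ)‖ ≤ 2 := by
      refine (norm_sub_le _ _).trans ?_
      rw [norm_one, Circle.norm_coe]; norm_num
    rw [← ofReal_norm, ← ofReal_norm, gagWt, ← ENNReal.ofReal_pow (norm_nonneg _),
      ← ENNReal.ofReal_mul (by positivity)]
    refine ENNReal.ofReal_le_ofReal ?_
    rw [Real.norm_of_nonneg (by positivity), abs_of_pos hh0]
    show _ ≤ 4 * h ^ (-(1 + 2 * α))
    refine mul_le_mul_of_nonneg_right ?_ (by positivity)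
    nlinarith [norm_nonneg (1 - (𝐞 (-(h * 1)) : ℂ))]
  unfold symInt
  rw [← Ioc_union_Ioi_eq_Ioi zero_le_one]
  exact ((lintegral_union_le _ _ _).trans_lt (ENNReal.add_lt_top.2 ⟨a, b⟩)).ne

theorem measurable_char : Measurable fun p : ℝ × ℝ => ‖1 - (𝐞 (-(p.1 * p.2)) : ℂ)‖ₑ ^ 2 := by
  have : Continuous fun p : ℝ × ℝ => 1 - (𝐞 (-(p.1 * p.2)) : ℂ) := by
    refine continuous_const.sub (continuous_subtype_val.comp (Real.continuous_fourierChar.comp (by fun_prop)))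
  exact (this.measurable.enorm).pow_const 2

theorem symInt_one_ne_zero (α : ℝ) : symInt α 1 ≠ 0 := by
  unfold symInt
  intro h
  have hm : Measurable fun h : ℝ => ‖1 - (𝐞 (-(h * 1)) : ℂ)‖ₑ ^ 2 * gagWt α h :=
    (measurable_char.comp (measurable_id.prodMk measurable_const)).mul (measurable_gagWt α)
  rw [lintegral_eq_zero_iff hm] at h
  have h2 : ∀ᵐ x ∂(volume.restrict (Ioo (0:ℝ) 1)), False := by
    have h' := ae_mono (Measure.restrict_mono (Ioo_subset_Ioi_self : Ioo (0:ℝ) 1 ⊆ Ioi 0) le_rfl) h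
    filter_upwards [h', ae_restrict_mem measurableSet_Ioo] with x hx hx2
    simp only [Pi.zero_apply, mul_eq_zero, pow_eq_zero_iff, ne_eq, OfNat.ofNat_ne_zero, not_false_eq_true,
      enorm_eq_zero, gagWt, ENNReal.ofReal_eq_zero] at hx
    rcases hx with hx | hx
    · rw [sub_eq_zero, eq_comm, Real.fourierChar_apply, Complex.exp_eq_one_iff] at hx
      obtain ⟨n, hn⟩ := hx
      have hpi := Real.pi_pos.ne'
      have : (-x : ℝ) = n := by
        have h3 : ((2 * Real.pi * -(x * 1) : ℝ) : ℂ) = ((n * (2 * Real.pi) : ℝ) : ℂ) := by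
          have := mul_right_cancel₀ (b := Complex.I) Complex.I_ne_zero
            (hn.trans (show _ = ((n : ℂ) * (2 * Real.pi)) * Complex.I by ring))
          rw [this]; push_cast; ring
        have h4 := Complex.ofReal_injective h3
        have : (2 * Real.pi) * (-x) = (2 * Real.pi) * n := by linarith
        exact mul_left_cancel₀ (by positivity) this
      have a1 : (n : ℝ) < 0 := by linarith [hx2.1]
      have a2 : (-1 : ℝ) < n := by linarith [hx2.2]
      have a1' : n < 0 := by exact_mod_cast a1
      have a2' : -1 < n := by exact_mod_cast a2
      omega
    · have : 0 < |x| ^ (-(1 + 2 * α)) := Real.rpow_pos_of_pos (abs_pos.2 hx2.1.ne') _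
      linarith
  rw [eventually_false_iff_eq_bot, ae_eq_bot, Measure.restrict_eq_zero] at h2
  simp at h2

/-! ### Difference energy of a function and of a fractional integral -/

theorem continuous_fourier {F : ℝ → ℂ} (h1 : Integrable F) : Continuous (𝓕 F) :=
  VectorFourier.fourierIntegral_continuous Real.continuous_fourierChar (by exact continuous_inner) h1

theorem fourier_diffKer_sq_le {β : ℝ} (h0 : 0 < β) (h1 : β < 1) :
    ∃ M : ℝ≥0∞, M ≠ ∞ ∧ ∀ h > 0, ∀ ξ ≠ 0,
      ‖𝓕 (fun t => (diffKer β h t : ℂ)) ξ‖ₑ ^ 2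
        ≤ M * ENNReal.ofReal (|ξ| ^ (-(2 * β))) * ‖1 - (𝐞 (-(h * ξ)) : ℂ)‖ₑ ^ 2 := by
  obtain ⟨M, hM, hb⟩ := fourier_diffKer_le h0 h1
  refine ⟨ENNReal.ofReal (M ^ 2), by simp, fun h hh ξ hξ => ?_⟩
  have hξ' : 0 < |ξ| := abs_pos.2 hξ
  rw [← ofReal_norm, ← ofReal_norm, ← ENNReal.ofReal_pow (norm_nonneg _),
    ← ENNReal.ofReal_pow (norm_nonneg _), ← ENNReal.ofReal_mul (by positivity),
    ← ENNReal.ofReal_mul (by positivity)]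
  refine ENNReal.ofReal_le_ofReal ?_
  have := pow_le_pow_left₀ (norm_nonneg _) (hb h hh ξ hξ) 2
  refine this.trans (le_of_eq ?_)
  have e : |ξ| ^ (-(2 * β)) = (|ξ| ^ (-β)) ^ 2 := by
    rw [← Real.rpow_mul_natCast hξ'.le]; congr 1; push_cast; ring
  rw [e]; ring

/-- Integrating the modulus of the increment symbol over all steps turns it into a multiple of
`|ξ| ^ (2α)`. -/
theorem lintegral_symInt (α : ℝ) {Φ : ℝ → ℝ≥0∞} (hΦ : Measurable Φ) :
    ∫⁻ h in Ioi 0, (∫⁻ ξ, ‖1 - (𝐞 (-(h * ξ)) : ℂ)‖ₑ ^ 2 * Φ ξ) * gagWt α h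
      = symInt α 1 * ∫⁻ ξ, ENNReal.ofReal (|ξ| ^ (2 * α)) * Φ ξ := by
  have hm1 : ∀ h : ℝ, Measurable fun ξ : ℝ => ‖1 - (𝐞 (-(h * ξ)) : ℂ)‖ₑ ^ 2 := fun h =>
    measurable_char.of_uncurry_left
      (f := fun h ξ : ℝ => ‖1 - (𝐞 (-(h * ξ)) : ℂ)‖ₑ ^ 2) (x := h)
  have hm2 : ∀ ξ : ℝ, Measurable fun h : ℝ => ‖1 - (𝐞 (-(h * ξ)) : ℂ)‖ₑ ^ 2 := fun ξ =>
    measurable_char.of_uncurry_right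
      (f := fun h ξ : ℝ => ‖1 - (𝐞 (-(h * ξ)) : ℂ)‖ₑ ^ 2) (y := ξ)
  calc _ = ∫⁻ h in Ioi 0, ∫⁻ ξ, ‖1 - (𝐞 (-(h * ξ)) : ℂ)‖ₑ ^ 2 * Φ ξ * gagWt α h := by
        refine lintegral_congr fun h => ?_
        exact (lintegral_mul_const (f := fun ξ : ℝ => ‖1 - (𝐞 (-(h * ξ)) : ℂ)‖ₑ ^ 2 * Φ ξ) _
          ((hm1 h).mul hΦ)).symm
    _ = ∫⁻ ξ, ∫⁻ h in Ioi 0, ‖1 - (𝐞 (-(h * ξ)) : ℂ)‖ₑ ^ 2 * Φ ξ * gagWt α h := by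
        rw [lintegral_lintegral_swap]
        exact ((measurable_char.mul (hΦ.comp measurable_snd)).mul
          ((measurable_gagWt α).comp measurable_fst)).aemeasurable
    _ = ∫⁻ ξ, symInt α ξ * Φ ξ := by
        refine lintegral_congr fun ξ => ?_
        refine Eq.trans ?_ (lintegral_mul_const
          (f := fun h : ℝ => ‖1 - (𝐞 (-(h * ξ)) : ℂ)‖ₑ ^ 2 * gagWt α h) _
          ((hm2 ξ).mul (measurable_gagWt α)))
        refine lintegral_congr fun h => ?_
        ring
    _ = ∫⁻ ξ, symInt α 1 * (ENNReal.ofReal (|ξ| ^ (2 * α)) * Φ ξ) := by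
        refine lintegral_congr_ae ?_
        filter_upwards [compl_mem_ae_iff.2 (measure_singleton (0:ℝ))] with ξ hξ
        rw [symInt_eq α hξ]; ring
    _ = _ := by
        rw [lintegral_const_mul]
        exact Measurable.mul (by fun_prop) hΦ

/-- The energy `∫_0^∞ ‖v - v(· - h)‖² h ^ (-(1 + 2α)) dh` on the line, which is half of the squared
Gagliardo seminorm (see `gag_univ`). -/
noncomputable def diffEnergy (α : ℝ) (v : ℝ → ℂ) : ℝ≥0∞ :=
  ∫⁻ h in Ioi 0, (∫⁻ x, ‖v x - v (x - h)‖ₑ ^ 2) * gagWt α h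

theorem diffEnergy_eq (α : ℝ) {v : ℝ → ℂ} (hi : Integrable v)
    (h2 : MemLp v 2) :
    diffEnergy α v = symInt α 1 * ∫⁻ ξ, ENNReal.ofReal (|ξ| ^ (2 * α)) * ‖𝓕 v ξ‖ₑ ^ 2 := by
  rw [← lintegral_symInt α (by have := (continuous_fourier hi).measurable; fun_prop)]
  refine lintegral_congr fun h => ?_
  have hshift : MemLp (fun x => v (x - h)) 2 :=
    h2.comp_measurePreserving (measurePreserving_sub_right volume h)
  have hp : ∫⁻ ξ, ‖𝓕 (fun x => v x - v (x - h)) ξ‖ₑ ^ 2 = ∫⁻ x, ‖v x - v (x - h)‖ₑ ^ 2 :=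
    plancherel (hi.sub (hi.comp_sub_right h)) (h2.sub hshift)
  rw [← hp]
  congr 1
  refine lintegral_congr fun ξ => ?_
  rw [← mul_pow, ← enorm_mul, ← fourier_sub_shift hi]

/-- Any `U` whose increments are the convolutions of `g` with `diffKer α h` has difference energy at
most a multiple of the squared `L²` norm of `g`: the factor `|ξ| ^ (-2α)` from the kernel cancels the
symbol `|ξ| ^ (2α)` of the energy. -/
theorem diffEnergy_le {α : ℝ} (h0 : 0 < α) (h1 : α < 1) :
    ∃ C : ℝ≥0∞, C ≠ ∞ ∧ ∀ g U : ℝ → ℂ, Measurable g → Integrable g → MemLp g 2 →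
      (∀ h > 0, ∀ᵐ x, U x - U (x - h) = ∫ t, (diffKer α h (x - t) : ℂ) * g t) →
      diffEnergy α U ≤ C * ∫⁻ t, ‖g t‖ₑ ^ 2 := by
  obtain ⟨M, hM, hb⟩ := fourier_diffKer_sq_le h0 h1
  refine ⟨M * symInt α 1, ENNReal.mul_ne_top hM (symInt_one_ne_top h0 h1), fun g U hg hi h2 hU => ?_⟩
  set Φ : ℝ → ℝ≥0∞ := fun ξ => ENNReal.ofReal (|ξ| ^ (-(2 * α))) * ‖𝓕 g ξ‖ₑ ^ 2 with hΦ
  have hΦm : Measurable Φ := by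
    have := (continuous_fourier hi).measurable; fun_prop
  have hg2 := (memLp_two_iff hg.aestronglyMeasurable).1 h2
  have step : ∀ h > 0, ∫⁻ x, ‖U x - U (x - h)‖ₑ ^ 2
      ≤ M * ∫⁻ ξ, ‖1 - (𝐞 (-(h * ξ)) : ℂ)‖ₑ ^ 2 * Φ ξ := by
    intro h hh
    rw [lintegral_congr_ae (g := fun x => ‖∫ t, (diffKer α h (x - t) : ℂ) * g t‖ₑ ^ 2)
      (by filter_upwards [hU h hh] with x hx; rw [hx]),
      conv_plancherel (measurable_diffKer α h) (integrable_diffKer h0 h1 hh) hg hi hg2,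
      ← lintegral_const_mul' _ _ hM]
    refine lintegral_mono_ae ?_
    filter_upwards [compl_mem_ae_iff.2 (measure_singleton (0:ℝ))] with ξ hξ
    refine (mul_le_mul_left (hb h hh ξ hξ) _).trans (le_of_eq ?_)
    rw [hΦ]; ring
  calc diffEnergy α U ≤ ∫⁻ h in Ioi 0, M * ((∫⁻ ξ, ‖1 - (𝐞 (-(h * ξ)) : ℂ)‖ₑ ^ 2 * Φ ξ) * gagWt α h) := by
        refine setLIntegral_mono' measurableSet_Ioi fun h hh => ?_
        rw [← mul_assoc]
        exact mul_le_mul_left (step h hh) _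
    _ = M * (symInt α 1 * ∫⁻ ξ, ENNReal.ofReal (|ξ| ^ (2 * α)) * Φ ξ) := by
        rw [lintegral_const_mul' _ _ hM, lintegral_symInt α hΦm]
    _ = M * (symInt α 1 * ∫⁻ ξ, ‖𝓕 g ξ‖ₑ ^ 2) := by
        congr 2
        refine lintegral_congr_ae ?_
        filter_upwards [compl_mem_ae_iff.2 (measure_singleton (0:ℝ))] with ξ hξ
        have hξ' : 0 < |ξ| := abs_pos.2 hξ
        rw [hΦ]
        simp only
        rw [← mul_assoc, ← ENNReal.ofReal_mul (by positivity), ← Real.rpow_add hξ']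
        simp
    _ ≤ _ := by rw [plancherel hi h2, mul_assoc]

/-- Convolving with an increment of the kernel of order `1 - α` costs, on the Fourier side, at most
`|ξ| ^ (α - 1) * |ε ξ|`; hence a factor `ε` times the square root of the energy of order `α`. -/
theorem conv_diffKer_le_diffEnergy {α : ℝ} (h0 : 0 < α) (h1 : α < 1) :
    ∃ C : ℝ≥0∞, C ≠ ∞ ∧ ∀ v : ℝ → ℂ, Measurable v → Integrable v → MemLp v 2 → ∀ ε > 0,
      ∫⁻ x, ‖∫ t, (diffKer (1 - α) ε (x - t) : ℂ) * v t‖ₑ ^ 2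
        ≤ C * ENNReal.ofReal (ε ^ 2) * diffEnergy α v := by
  obtain ⟨M, hM, hb⟩ := fourier_diffKer_sq_le (β := 1 - α) (by linarith) (by linarith)
  refine ⟨M * ENNReal.ofReal ((2 * Real.pi) ^ 2) * (symInt α 1)⁻¹, ENNReal.mul_ne_top
    (ENNReal.mul_ne_top hM ENNReal.ofReal_ne_top) (ENNReal.inv_ne_top.2 (symInt_one_ne_zero α)),
    fun v hv hi h2 ε hε => ?_⟩
  rw [conv_plancherel (measurable_diffKer _ ε) (integrable_diffKer (by linarith) (by linarith) hε) hv hi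
    ((memLp_two_iff hv.aestronglyMeasurable).1 h2), diffEnergy_eq α hi h2]
  set S := symInt α 1
  have hS : S⁻¹ * S = 1 := ENNReal.inv_mul_cancel (symInt_one_ne_zero α) (symInt_one_ne_top h0 h1)
  calc _ ≤ ∫⁻ ξ, (M * ENNReal.ofReal ((2 * Real.pi) ^ 2) * ENNReal.ofReal (ε ^ 2)) *
        (ENNReal.ofReal (|ξ| ^ (2 * α)) * ‖𝓕 v ξ‖ₑ ^ 2) := by
        refine lintegral_mono_ae ?_
        filter_upwards [compl_mem_ae_iff.2 (measure_singleton (0:ℝ))] with ξ hξ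
        have hξ' : 0 < |ξ| := abs_pos.2 hξ
        rw [← mul_assoc]
        refine mul_le_mul_left ((hb ε hε ξ hξ).trans ?_) _
        have l := enorm_one_sub_char_le (-(ε * ξ))
        have l2 : ‖1 - (𝐞 (-(ε * ξ)) : ℂ)‖ₑ ^ 2 ≤ ENNReal.ofReal ((2 * Real.pi * |-(ε * ξ)|) ^ 2) := by
          rw [← ofReal_norm, ← ENNReal.ofReal_pow (norm_nonneg _)]
          exact ENNReal.ofReal_le_ofReal (pow_le_pow_left₀ (norm_nonneg _) l 2)
        refine (mul_le_mul_right l2 _).trans (le_of_eq ?_)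
        simp only [mul_assoc]
        congr 1
        rw [← ENNReal.ofReal_mul (by positivity), ← ENNReal.ofReal_mul (by positivity),
          ← ENNReal.ofReal_mul (by positivity)]
        congr 1
        have e : |ξ| ^ (2 * α) = |ξ| ^ (-(2 * (1 - α))) * |ξ| ^ 2 := by
          rw [← Real.rpow_natCast, ← Real.rpow_add hξ']; congr 1; push_cast; ring
        rw [e, abs_neg, abs_mul, abs_of_pos hε]; ring
    _ = _ := by
        rw [lintegral_const_mul' _ _ (ENNReal.mul_ne_top (ENNReal.mul_ne_top hM ENNReal.ofReal_ne_top)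
          ENNReal.ofReal_ne_top)]
        set J := ∫⁻ ξ, ENNReal.ofReal (|ξ| ^ (2 * α)) * ‖𝓕 v ξ‖ₑ ^ 2
        set P := ENNReal.ofReal ((2 * Real.pi) ^ 2)
        set E := ENNReal.ofReal (ε ^ 2)
        calc M * P * E * J = M * P * E * J * (S⁻¹ * S) := by rw [hS, mul_one]
          _ = _ := by ring

/-! ### The fractional integral on the line and the Gagliardo energy -/

/-- Convolution of `g` with `powKer α`: the Riemann–Liouville integral from `-∞`, without the factor
`Γ(α)⁻¹`. -/
noncomputable def rlConv (α : ℝ) (g : ℝ → ℂ) (x : ℝ) : ℂ := ∫ t, (powKer α (x - t) : ℂ) * g t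

/-- Reduces local integrability questions for `powKer α` to its integrable increment. -/
theorem powKer_le {α : ℝ} (h1 : α < 1) (t : ℝ) : powKer α t ≤ |diffKer α 1 t| + 1 := by
  have hd : 0 ≤ |diffKer α 1 t| := abs_nonneg _
  rcases le_or_gt t 1 with h | h
  · have : diffKer α 1 t = powKer α t := by
      unfold diffKer; rw [show powKer α (t - 1) = 0 from if_neg (by linarith), sub_zero]
    rw [this, abs_of_nonneg (powKer_nonneg _ _)]; linarith
  · have : powKer α t ≤ 1 := by
      unfold powKer; rw [if_pos (by linarith)]
      exact Real.rpow_le_one_of_one_le_of_nonpos h.le (by linarith)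
    linarith

theorem measurable_kernel_mul (α : ℝ) {g : ℝ → ℂ} (hg : Measurable g) :
    Measurable fun p : ℝ × ℝ => (powKer α (p.1 - p.2) : ℂ) * g p.2 :=
  (Complex.measurable_ofReal.comp ((measurable_powKer α).comp (measurable_fst.sub measurable_snd))).mul
    (hg.comp measurable_snd)

theorem stronglyMeasurable_rlConv (α : ℝ) {g : ℝ → ℂ} (hg : Measurable g) :
    StronglyMeasurable (rlConv α g) :=
  (measurable_kernel_mul α hg).stronglyMeasurable.integral_prod_right

theorem ae_integrable_kernel {α : ℝ} (h0 : 0 < α) (h1 : α < 1) {g : ℝ → ℂ} (hg : Measurable g)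
    (hi : Integrable g) : ∀ᵐ x, Integrable fun t => (powKer α (x - t) : ℂ) * g t := by
  have hK : Integrable (diffKer α 1) := integrable_diffKer h0 h1 one_pos
  have := hi.ae_convolution_exists (L := ContinuousLinearMap.mul ℂ ℂ) (hK.ofReal (𝕜 := ℂ))
  filter_upwards [this] with x hx
  have hx' : Integrable fun t => g t * (diffKer α 1 (x - t) : ℂ) := hx
  refine Integrable.mono (hx'.norm.add hi.norm)
    ((measurable_kernel_mul α hg).comp measurable_prodMk_left).aestronglyMeasurable
    (Eventually.of_forall fun t => ?_)
  simp only [Pi.add_apply, norm_mul, Complex.norm_real, Real.norm_eq_abs]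
  rw [abs_of_nonneg (powKer_nonneg _ _), abs_of_nonneg (by positivity)]
  nlinarith [powKer_le h1 (x - t), norm_nonneg (g t)]

/-- The increments of `rlConv α g` are convolutions with `diffKer α h`. This holds almost everywhere
only, because the convolution integral need not converge at every point. -/
theorem rlConv_sub_shift {α : ℝ} (h0 : 0 < α) (h1 : α < 1) {g : ℝ → ℂ} (hg : Measurable g)
    (hi : Integrable g) (h : ℝ) :
    ∀ᵐ x, rlConv α g x - rlConv α g (x - h) = ∫ t, (diffKer α h (x - t) : ℂ) * g t := by
  have a := ae_integrable_kernel h0 h1 hg hi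
  have b : ∀ᵐ x, Integrable fun t => (powKer α (x - h - t) : ℂ) * g t :=
    (measurePreserving_sub_right volume h).quasiMeasurePreserving.ae a
  filter_upwards [a, b] with x ha hb
  unfold rlConv
  rw [← integral_sub ha hb]
  refine integral_congr_ae (Eventually.of_forall fun t => ?_)
  simp only [diffKer]
  rw [show x - t - h = x - h - t by ring]; push_cast; ring

theorem diffEnergy_rlConv_le {α : ℝ} (h0 : 0 < α) (h1 : α < 1) :
    ∃ C : ℝ≥0∞, C ≠ ∞ ∧ ∀ g : ℝ → ℂ, Measurable g → Integrable g → MemLp g 2 →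
      diffEnergy α (rlConv α g) ≤ C * ∫⁻ t, ‖g t‖ₑ ^ 2 := by
  obtain ⟨C, hC, h⟩ := diffEnergy_le h0 h1
  exact ⟨C, hC, fun g hg hi h2 => h g _ hg hi h2 fun s _ => rlConv_sub_shift h0 h1 hg hi s⟩

/-- The squared Gagliardo seminorm of order `α` on `S`, as an extended nonnegative number. -/
noncomputable def gag (α : ℝ) (S : Set ℝ) (u : ℝ → ℂ) : ℝ≥0∞ :=
  ∫⁻ x in S, ∫⁻ y in S, ‖u x - u y‖ₑ ^ 2 * gagWt α (x - y)

theorem gagWt_neg (α r : ℝ) : gagWt α (-r) = gagWt α r := by unfold gagWt; rw [abs_neg]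

theorem measurable_gagIntegrand (α : ℝ) {u : ℝ → ℂ} (hu : Measurable u) :
    Measurable fun p : ℝ × ℝ => ‖u p.1 - u p.2‖ₑ ^ 2 * gagWt α (p.1 - p.2) :=
  ((((hu.comp measurable_fst).sub (hu.comp measurable_snd)).enorm).pow_const 2).mul
    ((measurable_gagWt α).comp (measurable_fst.sub measurable_snd))

theorem gag_univ (α : ℝ) {u : ℝ → ℂ} (hu : Measurable u) :
    gag α univ u = 2 * diffEnergy α u := by
  set E : ℝ → ℝ≥0∞ := fun h => (∫⁻ x, ‖u x - u (x - h)‖ₑ ^ 2) * gagWt α h with hE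
  have hm : ∀ h, Measurable fun x => ‖u x - u (x - h)‖ₑ ^ 2 := fun h => by fun_prop
  have hm2 : Measurable fun p : ℝ × ℝ => ‖u p.1 - u (p.1 - p.2)‖ₑ ^ 2 := by fun_prop
  have e1 : gag α univ u = ∫⁻ h, E h := by
    unfold gag
    simp only [Measure.restrict_univ]
    calc _ = ∫⁻ x, ∫⁻ h, ‖u x - u (x - h)‖ₑ ^ 2 * gagWt α h := by
          refine lintegral_congr fun x => ?_
          rw [← lintegral_sub_left_eq_self _ x]
          simp only [sub_sub_cancel]
      _ = ∫⁻ h, ∫⁻ x, ‖u x - u (x - h)‖ₑ ^ 2 * gagWt α h := by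
          rw [lintegral_lintegral_swap]
          exact (hm2.mul ((measurable_gagWt α).comp measurable_snd)).aemeasurable
      _ = _ := lintegral_congr fun h => by rw [lintegral_mul_const _ (hm h)]
  have e2 : ∀ h, E (-h) = E h := by
    intro h
    simp only [hE, gagWt_neg]
    congr 1
    rw [← lintegral_sub_right_eq_self _ h]
    refine lintegral_congr fun x => ?_
    rw [sub_neg_eq_add, sub_add_cancel, enorm_sub_rev]
  have e3 : ∫⁻ h in Iic 0, E h = ∫⁻ h in Ioi 0, E h := by
    rw [setLIntegral_congr Iio_ae_eq_Iic.symm, ← lintegral_indicator measurableSet_Iio,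
      ← lintegral_indicator measurableSet_Ioi, ← lintegral_neg_eq_self]
    refine lintegral_congr fun h => ?_
    simp [indicator, e2]
  rw [e1, ← lintegral_add_compl E (measurableSet_Ioi (a := (0:ℝ))), compl_Ioi, e3, two_mul]
  rfl

theorem gag_mono (α : ℝ) {S T : Set ℝ} (h : S ⊆ T) (u : ℝ → ℂ) : gag α S u ≤ gag α T u :=
  (lintegral_mono' (Measure.restrict_mono h le_rfl) fun _ => lintegral_mono_set h)

/-! ### Hardy inequality for fractional integrals -/

theorem integrableOn_beta {a b : ℝ} (ha : 0 < a) (hb : 0 < b) :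
    IntegrableOn (fun s : ℝ => s ^ (a - 1) * (1 - s) ^ (b - 1)) (Ioo 0 1) := by
  have h := (Complex.betaIntegral_convergent (u := a) (v := b) (by simpa) (by simpa)).1.norm
  refine (IntegrableOn.mono_set h Ioo_subset_Ioc_self).congr_fun (fun s hs => ?_) measurableSet_Ioo
  have h1 : (0:ℝ) < 1 - s := by linarith [hs.2]
  have e1 : (s:ℂ) ^ ((a:ℂ) - 1) = ((s ^ (a - 1) : ℝ) : ℂ) := by
    rw [Complex.ofReal_cpow hs.1.le]; push_cast; rfl
  have e2 : (1 - (s:ℂ)) ^ ((b:ℂ) - 1) = (((1 - s) ^ (b - 1) : ℝ) : ℂ) := by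
    rw [Complex.ofReal_cpow h1.le]; push_cast; rfl
  simp only [e1, e2]
  rw [← Complex.ofReal_mul, Complex.norm_real, Real.norm_of_nonneg]
  exact mul_nonneg (Real.rpow_nonneg hs.1.le _) (Real.rpow_nonneg h1.le _)

theorem powKer_mul (β : ℝ) {a : ℝ} (ha : 0 < a) (s : ℝ) :
    powKer β (a * s) = a ^ (β - 1) * powKer β s := by
  unfold powKer
  rcases lt_or_ge 0 s with h | h
  · rw [if_pos (by positivity), if_pos h, Real.mul_rpow ha.le h.le]
  · rw [if_neg h.not_gt, if_neg (by nlinarith), mul_zero]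

/-- The weighted energy `∫_S |u|² x ^ (-2α)`; used for `S` contained in the positive half-line. -/
noncomputable def hardyE (α : ℝ) (S : Set ℝ) (u : ℝ → ℂ) : ℝ≥0∞ :=
  ∫⁻ x in S, ‖u x‖ₑ ^ 2 * ENNReal.ofReal (x ^ (-(2 * α)))

/-- Hardy inequality for the fractional integral. By scaling, `x ^ (-α) * rlConv α g x` is an average
of the dilates `g (s x)` with the weight `powKer α (1 - s)`; splitting off `s ^ (-1/2)` gives a finite
Beta integral (a Schur test). -/
theorem hardyE_rlConv_le {α : ℝ} (h0 : 0 < α) :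
    ∃ C : ℝ≥0∞, C ≠ ∞ ∧ ∀ g : ℝ → ℂ, Measurable g → (∀ x ≤ 0, g x = 0) →
      hardyE α (Ioi 0) (rlConv α g) ≤ C * ∫⁻ t, ‖g t‖ₑ ^ 2 := by
  set a : ℝ → ℝ≥0∞ := (Ioi (0:ℝ)).indicator
    fun s => ENNReal.ofReal (powKer α (1 - s) * s ^ (-(1/2) : ℝ)) with ha
  have ham : Measurable a := by
    refine Measurable.indicator ?_ measurableSet_Ioi
    have := measurable_powKer α
    fun_prop
  set K := ∫⁻ s, a s with hKd
  have hK : K ≠ ∞ := by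
    have e : K = ∫⁻ s in Ioo 0 1, ENNReal.ofReal (s ^ ((1/2:ℝ) - 1) * (1 - s) ^ (α - 1)) := by
      rw [hKd, ← lintegral_indicator measurableSet_Ioo]
      refine lintegral_congr fun s => ?_
      rw [ha]
      by_cases hs : 0 < s
      · by_cases hs1 : s < 1
        · rw [indicator_of_mem (show s ∈ Ioi 0 from hs), indicator_of_mem (show s ∈ Ioo 0 1 from ⟨hs, hs1⟩),
            powKer, if_pos (by linarith), mul_comm]
          norm_num
        · rw [indicator_of_mem (show s ∈ Ioi 0 from hs), indicator_of_notMem (fun h => hs1 h.2),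
            powKer, if_neg (by linarith)]
          simp
      · rw [indicator_of_notMem (show s ∉ Ioi 0 from hs), indicator_of_notMem (fun h => hs h.1)]
    rw [e]
    exact ((integrableOn_beta (by norm_num : (0:ℝ) < 1/2) h0).lintegral_lt_top).ne
  refine ⟨K ^ 2, ENNReal.pow_ne_top hK, fun g hg hz => ?_⟩
  have pt : ∀ x ∈ Ioi (0:ℝ), ‖rlConv α g x‖ₑ ^ 2 * ENNReal.ofReal (x ^ (-(2 * α)))
      ≤ K * ∫⁻ s, a s * (ENNReal.ofReal s * ‖g (s * x)‖ₑ ^ 2) := by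
    intro x hx
    have hx : 0 < x := hx
    have b1 : ‖rlConv α g x‖ₑ ≤ ENNReal.ofReal (x ^ α) *
        ∫⁻ s, a s * (ENNReal.ofReal (s ^ (1/2:ℝ)) * ‖g (s * x)‖ₑ) := by
      calc ‖rlConv α g x‖ₑ ≤ ∫⁻ t, ENNReal.ofReal (powKer α (x - t)) * ‖g t‖ₑ := by
            refine (enorm_integral_le_lintegral_enorm _).trans (le_of_eq ?_)
            refine lintegral_congr fun t => ?_
            rw [enorm_mul, ← ofReal_norm, Complex.norm_real, Real.norm_of_nonneg (powKer_nonneg _ _)]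
        _ = ENNReal.ofReal x * ∫⁻ s, ENNReal.ofReal (powKer α (x - x * s)) * ‖g (x * s)‖ₑ := by
            rw [lintegral_comp_mul_pos (fun t => ENNReal.ofReal (powKer α (x - t)) * ‖g t‖ₑ) hx,
              ← mul_assoc, ← ENNReal.ofReal_mul hx.le, mul_inv_cancel₀ hx.ne', ENNReal.ofReal_one, one_mul]
        _ = ENNReal.ofReal x * ∫⁻ s, ENNReal.ofReal (x ^ (α - 1)) *
              (a s * (ENNReal.ofReal (s ^ (1/2:ℝ)) * ‖g (s * x)‖ₑ)) := by
            congr 1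
            refine lintegral_congr fun s => ?_
            rw [mul_comm x s]
            by_cases hs : 0 < s
            · rw [ha, indicator_of_mem (show s ∈ Ioi 0 from hs), ← mul_assoc, ← mul_assoc,
                ← ENNReal.ofReal_mul (by positivity), ← ENNReal.ofReal_mul
                (mul_nonneg (by positivity) (mul_nonneg (powKer_nonneg _ _) (by positivity)))]
              congr 2
              rw [show x - s * x = x * (1 - s) by ring, powKer_mul α hx]
              have : s ^ (-(1/2):ℝ) * s ^ (1/2:ℝ) = 1 := by
                rw [← Real.rpow_add hs]; norm_num
              calc _ = x ^ (α - 1) * powKer α (1 - s) * (s ^ (-(1/2):ℝ) * s ^ (1/2:ℝ)) := by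
                    rw [this, mul_one]
                _ = _ := by ring
            · rw [hz (s * x) (by nlinarith)]; simp
        _ = _ := by
            rw [lintegral_const_mul' _ _ ENNReal.ofReal_ne_top, ← mul_assoc, ← ENNReal.ofReal_mul hx.le]
            congr 2
            rw [← Real.rpow_one_add' hx.le (by linarith)]; congr 1; ring
    have b2 := lintegral_weighted_sq_le (μ := volume) (a := a)
      (b := fun s => ENNReal.ofReal (s ^ (1/2:ℝ)) * ‖g (s * x)‖ₑ) ham.aemeasurable
      (Measurable.aemeasurable (by fun_prop))
    have e0 : ENNReal.ofReal (x ^ α) ^ 2 * ENNReal.ofReal (x ^ (-(2 * α))) = 1 := by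
      rw [← ENNReal.ofReal_pow (by positivity), ← ENNReal.ofReal_mul (by positivity),
        ← Real.rpow_mul_natCast hx.le, ← Real.rpow_add hx]
      norm_num [mul_comm]
    calc _ ≤ (ENNReal.ofReal (x ^ α) *
          ∫⁻ s, a s * (ENNReal.ofReal (s ^ (1/2:ℝ)) * ‖g (s * x)‖ₑ)) ^ 2 * ENNReal.ofReal (x ^ (-(2 * α))) := by
          gcongr
      _ = (∫⁻ s, a s * (ENNReal.ofReal (s ^ (1/2:ℝ)) * ‖g (s * x)‖ₑ)) ^ 2 := by
          rw [mul_pow, mul_right_comm, e0, one_mul]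
      _ ≤ _ := b2
      _ = _ := by
          congr 1
          refine lintegral_congr fun s => ?_
          by_cases hs : 0 < s
          · rw [mul_pow, ← ENNReal.ofReal_pow (by positivity), ← Real.rpow_mul_natCast hs.le]
            norm_num
          · rw [ha, indicator_of_notMem (show s ∉ Ioi 0 from hs)]; simp
  have hmg : Measurable fun p : ℝ × ℝ => a p.2 * (ENNReal.ofReal p.2 * ‖g (p.2 * p.1)‖ₑ ^ 2) := by
    fun_prop
  calc hardyE α (Ioi 0) (rlConv α g)
      ≤ ∫⁻ x in Ioi 0, K * ∫⁻ s, a s * (ENNReal.ofReal s * ‖g (s * x)‖ₑ ^ 2) :=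
        setLIntegral_mono' measurableSet_Ioi pt
    _ ≤ ∫⁻ x, K * ∫⁻ s, a s * (ENNReal.ofReal s * ‖g (s * x)‖ₑ ^ 2) := setLIntegral_le_lintegral _ _
    _ = K * ∫⁻ s, ∫⁻ x, a s * (ENNReal.ofReal s * ‖g (s * x)‖ₑ ^ 2) := by
        rw [lintegral_const_mul' _ _ hK, lintegral_lintegral_swap hmg.aemeasurable]
    _ = K * ∫⁻ s, a s * ∫⁻ t, ‖g t‖ₑ ^ 2 := by
        congr 1
        refine lintegral_congr fun s => ?_
        by_cases hs : 0 < s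
        · rw [lintegral_const_mul _ (by fun_prop), lintegral_const_mul _ (by fun_prop),
            lintegral_comp_mul_pos (fun y => ‖g y‖ₑ ^ 2) hs, ← mul_assoc (ENNReal.ofReal s),
            ← ENNReal.ofReal_mul hs.le, mul_inv_cancel₀ hs.ne', ENNReal.ofReal_one, one_mul]
        · rw [ha, indicator_of_notMem (show s ∉ Ioi 0 from hs)]; simp
    _ = _ := by
        rw [lintegral_mul_const _ ham, pow_two, mul_assoc]

/-! ### Fractional Hardy inequality on the unit interval -/

/-- Absorption of a term on the left-hand side; finiteness of `H` is essential. -/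
theorem ennreal_absorb {H X : ℝ≥0∞} {r : ℝ} (hr0 : 0 ≤ r) (hr : r < 1) (hH : H ≠ ∞)
    (h : H ≤ ENNReal.ofReal r * H + X) : H ≤ ENNReal.ofReal (1 - r)⁻¹ * X := by
  have e : ENNReal.ofReal (1 - r) * H + ENNReal.ofReal r * H = H := by
    rw [← add_mul, ← ENNReal.ofReal_add (by linarith) hr0]; simp
  have h2 : ENNReal.ofReal (1 - r) * H ≤ X := by
    rw [← ENNReal.add_le_add_iff_right (ENNReal.mul_ne_top (ENNReal.ofReal_ne_top (r := r)) hH), e,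
      add_comm]
    exact h
  calc H = ENNReal.ofReal (1 - r)⁻¹ * (ENNReal.ofReal (1 - r) * H) := by
        rw [← mul_assoc, ← ENNReal.ofReal_mul (inv_nonneg.2 (by linarith)),
          inv_mul_cancel₀ (by linarith), ENNReal.ofReal_one, one_mul]
    _ ≤ _ := by gcongr

theorem enorm_sq_le {ε : ℝ} (hε : 0 < ε) (a b : ℂ) :
    ‖a‖ₑ ^ 2 ≤ ENNReal.ofReal (1 + ε) * ‖b‖ₑ ^ 2 + ENNReal.ofReal (1 + ε⁻¹) * ‖a - b‖ₑ ^ 2 := by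
  simp only [← ofReal_norm]
  rw [← ENNReal.ofReal_pow (norm_nonneg _), ← ENNReal.ofReal_pow (norm_nonneg _),
    ← ENNReal.ofReal_pow (norm_nonneg _), ← ENNReal.ofReal_mul (by positivity),
    ← ENNReal.ofReal_mul (by positivity), ← ENNReal.ofReal_add (by positivity) (by positivity)]
  refine ENNReal.ofReal_le_ofReal ?_
  have h : ‖a‖ ≤ ‖b‖ + ‖a - b‖ := by
    have := norm_add_le b (a - b); rwa [add_sub_cancel] at this
  have h2 : 0 ≤ ε⁻¹ * (ε * ‖b‖ - ‖a - b‖) ^ 2 := by positivity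
  have h3 : ε⁻¹ * (ε * ‖b‖ - ‖a - b‖) ^ 2 = ε * ‖b‖ ^ 2 - 2 * ‖b‖ * ‖a - b‖ + ε⁻¹ * ‖a - b‖ ^ 2 := by
    field_simp; ring
  have h4 := pow_le_pow_left₀ (norm_nonneg _) h 2
  nlinarith

/-- The weighted energy of the dilation increment `u x - u (t x)` on `(0, 1]`. -/
noncomputable def dilE (α : ℝ) (u : ℝ → ℂ) (t : ℝ) : ℝ≥0∞ :=
  ∫⁻ x in Ioc 0 1, ‖u x - u (t * x)‖ₑ ^ 2 * ENNReal.ofReal (x ^ (-(2 * α)))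

/-- Effect of a dilation on the weighted energy; the exponent `2α - 1` vanishes exactly for
`α = 1/2`. -/
theorem hardyE_dil (α : ℝ) (u : ℝ → ℂ) {t : ℝ} (ht : 0 < t) :
    ∫⁻ x in Ioc 0 1, ‖u (t * x)‖ₑ ^ 2 * ENNReal.ofReal (x ^ (-(2 * α)))
      = ENNReal.ofReal (t ^ (2 * α - 1)) * hardyE α (Ioc 0 t) u := by
  unfold hardyE
  have h := lintegral_comp_mul_pos ((Ioc (0:ℝ) t).indicator fun y =>
    ‖u y‖ₑ ^ 2 * ENNReal.ofReal (y ^ (-(2 * α)))) ht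
  rw [lintegral_indicator measurableSet_Ioc] at h
  have e : ENNReal.ofReal (t ^ (2 * α - 1)) = ENNReal.ofReal (t ^ (2 * α)) * ENNReal.ofReal t⁻¹ := by
    rw [← ENNReal.ofReal_mul (by positivity), Real.rpow_sub ht, Real.rpow_one, div_eq_mul_inv]
  rw [e, mul_assoc, ← h, ← lintegral_const_mul' _ _ ENNReal.ofReal_ne_top,
    ← lintegral_indicator measurableSet_Ioc]
  refine lintegral_congr fun x => ?_
  by_cases hx : x ∈ Ioc (0:ℝ) 1
  · have hx2 : t * x ∈ Ioc 0 t := ⟨mul_pos ht hx.1, by nlinarith [hx.2]⟩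
    rw [indicator_of_mem hx, indicator_of_mem hx2, mul_left_comm, ← ENNReal.ofReal_mul (by positivity)]
    congr 2
    rw [Real.mul_rpow ht.le hx.1.le, ← mul_assoc, ← Real.rpow_add ht]; simp
  · have hx2 : t * x ∉ Ioc 0 t := fun h => hx ⟨by nlinarith [h.1], by nlinarith [h.2]⟩
    rw [indicator_of_notMem hx, indicator_of_notMem hx2, mul_zero]

theorem hardyE_mono (α : ℝ) {S T : Set ℝ} (h : S ⊆ T) (u : ℝ → ℂ) : hardyE α S u ≤ hardyE α T u :=
  lintegral_mono_set h

theorem lintegral_two_term {f g w : ℝ → ℝ≥0∞} (hg : Measurable g) (hw : Measurable w)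
    {μ : Measure ℝ} {k : ℝ → ℝ≥0∞} {a b : ℝ≥0∞} (ha : a ≠ ∞) (hb : b ≠ ∞)
    (h : ∀ x, f x ≤ a * g x + b * k x) :
    ∫⁻ x, f x * w x ∂μ ≤ a * (∫⁻ x, g x * w x ∂μ) + b * ∫⁻ x, k x * w x ∂μ := by
  rw [← lintegral_const_mul' _ _ ha, ← lintegral_const_mul' _ _ hb,
    ← lintegral_add_left (by fun_prop)]
  refine lintegral_mono fun x => (mul_le_mul_left (h x) _).trans (le_of_eq ?_)
  ring

/-- Comparison of `u x` with `u (t x)` at a fixed scale `t`. The factor `(1/2) ^ |2α - 1|` in front of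
the weighted energy on the right is less than `1` because `α ≠ 1/2`. -/
theorem hardyE_step {α ε : ℝ} (h0 : 0 < α) (hα : α ≠ 1 / 2) (hε : 0 < ε) {u : ℝ → ℂ}
    (hu : Measurable u) {t : ℝ} (ht0 : 1 / 4 < t) (ht : t < 1 / 2) :
    hardyE α (Ioc 0 1) u ≤ ENNReal.ofReal ((1 / 2) ^ |2 * α - 1| * (1 + ε)) * hardyE α (Ioc 0 1) u +
      (ENNReal.ofReal (1 + ε⁻¹) * dilE α u t + 16 * ∫⁻ x in Ioc 0 1, ‖u x‖ₑ ^ 2) := by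
  have htp : 0 < t := by linarith
  have hw : Measurable fun x : ℝ => ENNReal.ofReal (x ^ (-(2 * α))) := by fun_prop
  rw [ENNReal.ofReal_mul (by positivity)]
  rcases lt_or_gt_of_ne hα with h | h
  · -- For `α < 1/2` the energy on `(0, t]` is a small multiple of the energy of the dilate on `(0, 1]`,
    -- and the weight is bounded on `(t, 1]`.
    have b1 : ENNReal.ofReal (t ^ (2 * α - 1)) * hardyE α (Ioc 0 t) u ≤
        ENNReal.ofReal (1 + ε) * hardyE α (Ioc 0 1) u + ENNReal.ofReal (1 + ε⁻¹) * dilE α u t := by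
      rw [← hardyE_dil α u htp]
      refine lintegral_two_term (by fun_prop) hw ENNReal.ofReal_ne_top ENNReal.ofReal_ne_top fun x => ?_
      rw [enorm_sub_rev (u x)]
      exact enorm_sq_le hε _ _
    have hq : t ^ (1 - 2 * α) ≤ (1 / 2 : ℝ) ^ |2 * α - 1| := by
      rw [abs_of_neg (by linarith), neg_sub]
      exact Real.rpow_le_rpow htp.le ht.le (by linarith)
    have hq1 : t ^ (1 - 2 * α) ≤ 1 := Real.rpow_le_one htp.le (by linarith) (by linarith)
    have b2 : hardyE α (Ioc 0 t) u ≤ ENNReal.ofReal (t ^ (1 - 2 * α)) *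
        (ENNReal.ofReal (1 + ε) * hardyE α (Ioc 0 1) u + ENNReal.ofReal (1 + ε⁻¹) * dilE α u t) := by
      calc hardyE α (Ioc 0 t) u = ENNReal.ofReal (t ^ (1 - 2 * α)) *
            (ENNReal.ofReal (t ^ (2 * α - 1)) * hardyE α (Ioc 0 t) u) := by
            rw [← mul_assoc, ← ENNReal.ofReal_mul (by positivity), ← Real.rpow_add htp]; simp
        _ ≤ _ := by gcongr
    have b3 : hardyE α (Ioc t 1) u ≤ 16 * ∫⁻ x in Ioc 0 1, ‖u x‖ₑ ^ 2 := by
      calc hardyE α (Ioc t 1) u ≤ ∫⁻ x in Ioc t 1, 16 * ‖u x‖ₑ ^ 2 := by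
            refine setLIntegral_mono' measurableSet_Ioc fun x hx => ?_
            rw [mul_comm]
            have hx0 : 1 / 4 < x := by linarith [hx.1]
            gcongr
            rw [show (16:ℝ≥0∞) = ENNReal.ofReal 16 by simp]
            refine ENNReal.ofReal_le_ofReal ?_
            calc x ^ (-(2 * α)) ≤ (1 / 4 : ℝ) ^ (-(2 * α)) :=
                  Real.rpow_le_rpow_of_nonpos (by norm_num) hx0.le (by linarith)
              _ ≤ (1 / 4 : ℝ) ^ (-2 : ℝ) :=
                  Real.rpow_le_rpow_of_exponent_ge (by norm_num) (by norm_num) (by linarith)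
              _ = 16 := by rw [Real.rpow_neg (by norm_num)]; norm_num
        _ ≤ ∫⁻ x in Ioc 0 1, 16 * ‖u x‖ₑ ^ 2 := lintegral_mono_set (Ioc_subset_Ioc_left htp.le)
        _ = _ := lintegral_const_mul' _ _ (by norm_num)
    have b4 : hardyE α (Ioc 0 1) u ≤ hardyE α (Ioc 0 t) u + hardyE α (Ioc t 1) u := by
      unfold hardyE
      rw [← Ioc_union_Ioc_eq_Ioc htp.le (by linarith : t ≤ 1)]
      exact lintegral_union_le _ _ _
    refine b4.trans ((add_le_add b2 b3).trans ?_)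
    rw [mul_add, ← mul_assoc, add_assoc]
    have q1 : ENNReal.ofReal (t ^ (1 - 2 * α)) * (ENNReal.ofReal (1 + ε⁻¹) * dilE α u t) ≤
        ENNReal.ofReal (1 + ε⁻¹) * dilE α u t :=
      (mul_le_mul_left (ENNReal.ofReal_le_one.2 hq1) _).trans (one_mul _).le
    have q2 := ENNReal.ofReal_le_ofReal hq
    gcongr
  · -- For `α > 1/2` the energy of the dilate is a small multiple of the energy of `u`.
    have b1 : hardyE α (Ioc 0 1) u ≤
        ENNReal.ofReal (1 + ε) * (ENNReal.ofReal (t ^ (2 * α - 1)) * hardyE α (Ioc 0 t) u) +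
          ENNReal.ofReal (1 + ε⁻¹) * dilE α u t := by
      rw [← hardyE_dil α u htp]
      exact lintegral_two_term (by fun_prop) hw ENNReal.ofReal_ne_top ENNReal.ofReal_ne_top
        fun x => enorm_sq_le hε _ _
    have hq : t ^ (2 * α - 1) ≤ (1 / 2 : ℝ) ^ |2 * α - 1| := by
      rw [abs_of_pos (by linarith)]
      exact Real.rpow_le_rpow htp.le ht.le (by linarith)
    refine b1.trans (add_le_add ?_ le_self_add)
    rw [mul_comm (ENNReal.ofReal ((1/2) ^ _)), mul_assoc]
    gcongr
    exact hardyE_mono α (Ioc_subset_Ioc_right (by linarith)) u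

/-- Substituting `y = t x`, the dilation increments are increments `u x - u y` with
`x - y ≤ x`, so that their average is controlled by the Gagliardo energy. -/
theorem lintegral_dilE_le {α : ℝ} (h0 : 0 < α) {u : ℝ → ℂ} (hu : Measurable u) :
    ∫⁻ t in Ioo (1/4) (1/2), dilE α u t ≤ gag α (Ioc 0 1) u := by
  unfold dilE gag
  have hm : Measurable fun p : ℝ × ℝ =>
      ‖u p.2 - u (p.1 * p.2)‖ₑ ^ 2 * ENNReal.ofReal (p.2 ^ (-(2 * α))) := by fun_prop
  rw [lintegral_lintegral_swap hm.aemeasurable]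
  refine setLIntegral_mono' measurableSet_Ioc fun x hx => ?_
  have hx0 := hx.1
  set F : ℝ → ℝ≥0∞ := (Ioo (0:ℝ) x).indicator
    fun y => ENNReal.ofReal x * (‖u x - u y‖ₑ ^ 2 * gagWt α (x - y)) with hF
  have h := lintegral_comp_mul_pos F hx0
  calc _ ≤ ∫⁻ t, F (x * t) := by
        rw [← lintegral_indicator measurableSet_Ioo]
        refine lintegral_mono fun t => ?_
        by_cases ht : t ∈ Ioo (1/4:ℝ) (1/2)
        · have ht1 : 0 < t := by linarith [ht.1]
          have ht2 : t < 1 := by linarith [ht.2]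
          have h3 : x * t < x := by nlinarith
          have h4 : 0 < x * t := mul_pos hx0 ht1
          rw [indicator_of_mem ht, hF, indicator_of_mem (show x * t ∈ Ioo 0 x from ⟨h4, h3⟩),
            mul_left_comm, mul_comm t x]
          refine mul_le_mul_right ?_ _
          unfold gagWt
          rw [← ENNReal.ofReal_mul hx0.le]
          refine ENNReal.ofReal_le_ofReal ?_
          rw [abs_of_pos (by linarith)]
          calc x ^ (-(2 * α)) = x * x ^ (-(1 + 2 * α)) := by
                rw [← Real.rpow_one_add' hx0.le (by linarith)]; congr 1; ring
            _ ≤ _ := by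
                exact mul_le_mul_of_nonneg_left (Real.rpow_le_rpow_of_nonpos (sub_pos.2 h3)
                  (sub_le_self x h4.le) (by linarith)) hx0.le
        · rw [indicator_of_notMem ht]; exact zero_le
    _ = ∫⁻ y in Ioo 0 x, ‖u x - u y‖ₑ ^ 2 * gagWt α (x - y) := by
        rw [h, hF, lintegral_indicator measurableSet_Ioo, lintegral_const_mul' _ _ ENNReal.ofReal_ne_top,
          ← mul_assoc, ← ENNReal.ofReal_mul (by positivity), inv_mul_cancel₀ hx0.ne',
          ENNReal.ofReal_one, one_mul]
    _ ≤ _ := lintegral_mono_set (Ioo_subset_Ioc_self.trans (Ioc_subset_Ioc_right hx.2))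

/-- Fractional Hardy inequality on `(0, 1]` away from the critical exponent, for functions whose
weighted energy is already finite. Without that proviso it fails for `α > 1/2`, by taking `u` constant. -/
theorem hardyE_le {α : ℝ} (h0 : 0 < α) (hα : α ≠ 1 / 2) :
    ∃ C : ℝ≥0∞, C ≠ ∞ ∧ ∀ u : ℝ → ℂ, Measurable u → hardyE α (Ioc 0 1) u ≠ ∞ →
      hardyE α (Ioc 0 1) u ≤ C * ((∫⁻ x in Ioc 0 1, ‖u x‖ₑ ^ 2) + gag α (Ioc 0 1) u) := by
  set q : ℝ := (1 / 2) ^ |2 * α - 1| with hq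
  have hq0 : 0 < q := by positivity
  have hq1 : q < 1 := by
    refine Real.rpow_lt_one (by norm_num) (by norm_num) (abs_pos.2 ?_)
    intro h; exact hα (by linarith)
  -- With this choice `q * (1 + ε) = (1 + q) / 2 < 1`.
  set ε : ℝ := (1 - q) / (2 * q) with hε
  have hε0 : 0 < ε := div_pos (by linarith) (by linarith)
  set r : ℝ := q * (1 + ε) with hr
  have hr' : r = (1 + q) / 2 := by rw [hr, hε]; field_simp; ring
  set A := ENNReal.ofReal (1 - r)⁻¹
  set B := ENNReal.ofReal (1 + ε⁻¹)
  refine ⟨4 * A * (B + 16), by finiteness, fun u hu hH => ?_⟩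
  set H := hardyE α (Ioc 0 1) u
  set L := ∫⁻ x in Ioc 0 1, ‖u x‖ₑ ^ 2
  have st : ∀ t ∈ Ioo (1/4:ℝ) (1/2), H ≤ A * B * dilE α u t + A * 16 * L := by
    intro t ht
    refine (ennreal_absorb (r := r) (by rw [hr']; linarith) (by rw [hr']; linarith) hH
      (hardyE_step h0 hα hε0 hu ht.1 ht.2)).trans (le_of_eq ?_)
    rw [mul_add, mul_assoc, mul_assoc]
  have I := setLIntegral_mono' (μ := volume) measurableSet_Ioo st
  rw [lintegral_add_right _ measurable_const, lintegral_const_mul' _ _ (by finiteness)] at I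
  simp only [lintegral_const, Measure.restrict_apply_univ, Real.volume_Ioo] at I
  have e : ENNReal.ofReal (1 / 2 - 1 / 4) = 4⁻¹ := by
    rw [show (1/2 - 1/4 : ℝ) = 4⁻¹ by norm_num, ENNReal.ofReal_inv_of_pos (by norm_num)]; norm_num
  rw [e] at I
  have I2 := I.trans (add_le_add_left (mul_le_mul_right (lintegral_dilE_le h0 hu) (A * B)) _)
  set G := gag α (Ioc 0 1) u
  have e4 : (4:ℝ≥0∞) * 4⁻¹ = 1 := ENNReal.mul_inv_cancel (by norm_num) (by norm_num)
  calc H = 4 * (H * 4⁻¹) := by rw [mul_left_comm, e4, mul_one]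
    _ ≤ 4 * (A * B * G + A * 16 * L * 4⁻¹) := by gcongr
    _ ≤ 4 * (A * B * (L + G) + A * 16 * (L + G) * 1) := by
        gcongr
        · exact le_add_self
        · exact le_self_add
        · norm_num
    _ = _ := by ring

/-! ### Extension from the unit interval to the line -/

/-- The reflection of the half-line `[1, ∞)` onto `(-∞, 1]`, a `1`-Lipschitz map fixing `(-∞, 1]`. -/
noncomputable def foldMap (x : ℝ) : ℝ := min x (2 - x)

/-- The restriction of `u` to `(0, 1]`, extended by zero to `(-∞, 0]` and evenly about `x = 1`; it
is supported in `[0, 2]`. -/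
noncomputable def evenExt (u : ℝ → ℂ) (x : ℝ) : ℂ := (Ioc (0:ℝ) 1).indicator u (foldMap x)

theorem measurable_foldMap : Measurable foldMap := by unfold foldMap; fun_prop

theorem measurable_evenExt {u : ℝ → ℂ} (hu : Measurable u) : Measurable (evenExt u) :=
  (hu.indicator measurableSet_Ioc).comp measurable_foldMap

theorem abs_foldMap_sub_le (x y : ℝ) : |foldMap x - foldMap y| ≤ |x - y| := by
  unfold foldMap
  refine (abs_min_sub_min_le_max _ _ _ _).trans (max_le le_rfl (le_of_eq ?_))
  rw [← abs_neg]; congr 1; ring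

theorem lintegral_comp_foldMap (F : ℝ → ℝ≥0∞) :
    ∫⁻ x, F (foldMap x) = 2 * ∫⁻ x in Iic 1, F x := by
  rw [← lintegral_add_compl _ (measurableSet_Iic (a := (1:ℝ))), two_mul, compl_Iic]
  congr 1
  · refine setLIntegral_congr_fun measurableSet_Iic fun x hx => ?_
    have hx : x ≤ 1 := hx
    simp only [foldMap]; rw [min_eq_left (by linarith)]
  · rw [setLIntegral_congr Iio_ae_eq_Iic.symm, ← lintegral_indicator measurableSet_Iio,
      ← lintegral_indicator measurableSet_Ioi, ← lintegral_sub_left_eq_self _ 2]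
    refine lintegral_congr fun x => ?_
    by_cases hx : x < 1
    · rw [indicator_of_mem (show 2 - x ∈ Ioi 1 from by rw [mem_Ioi]; linarith),
        indicator_of_mem (show x ∈ Iio 1 from hx)]
      simp only [foldMap]; rw [min_eq_right (by linarith), sub_sub_cancel]
    · rw [indicator_of_notMem (show 2 - x ∉ Ioi 1 from by rw [mem_Ioi]; linarith),
        indicator_of_notMem (show x ∉ Iio 1 from hx)]

/-- Reflection increases the energy by a bounded factor, since `foldMap` contracts distances and is
two-to-one. -/
theorem gag_evenExt_le_Iic {α : ℝ} (h0 : 0 < α) (u : ℝ → ℂ) :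
    gag α univ (evenExt u) ≤ 4 * gag α (Iic 1) ((Ioc (0:ℝ) 1).indicator u) := by
  set w := (Ioc (0:ℝ) 1).indicator u with hw
  set Ψ : ℝ → ℝ → ℝ≥0∞ := fun a b => ‖w a - w b‖ₑ ^ 2 * gagWt α (a - b) with hΨ
  have pt : ∀ x y, ‖evenExt u x - evenExt u y‖ₑ ^ 2 * gagWt α (x - y) ≤ Ψ (foldMap x) (foldMap y) := by
    intro x y
    simp only [hΨ, evenExt, ← hw]
    by_cases he : foldMap x = foldMap y
    · rw [he]; simp
    · refine mul_le_mul_right (ENNReal.ofReal_le_ofReal ?_) _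
      exact Real.rpow_le_rpow_of_nonpos (abs_pos.2 (sub_ne_zero.2 he)) (abs_foldMap_sub_le x y)
        (by linarith)
  unfold gag
  simp only [Measure.restrict_univ]
  calc _ ≤ ∫⁻ x, ∫⁻ y, Ψ (foldMap x) (foldMap y) := lintegral_mono fun x => lintegral_mono fun y => pt x y
    _ = ∫⁻ x, 2 * ∫⁻ b in Iic 1, Ψ (foldMap x) b :=
        lintegral_congr fun x => lintegral_comp_foldMap (Ψ (foldMap x))
    _ = 2 * ∫⁻ x, ∫⁻ b in Iic 1, Ψ (foldMap x) b := lintegral_const_mul' _ _ (by norm_num)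
    _ = 2 * (2 * ∫⁻ a in Iic 1, ∫⁻ b in Iic 1, Ψ a b) := by
        rw [lintegral_comp_foldMap (fun a => ∫⁻ b in Iic 1, Ψ a b)]
    _ = _ := by rw [← mul_assoc]; norm_num; rfl

/-- The mass of the Gagliardo weight seen from `a > 0` on the negative half-line, which is where the
Hardy weight comes from. -/
theorem lintegral_gagWt_Iic {α : ℝ} (h0 : 0 < α) {a : ℝ} (ha : 0 < a) :
    ∫⁻ b in Iic 0, gagWt α (a - b) = ENNReal.ofReal (2 * α)⁻¹ * ENNReal.ofReal (a ^ (-(2 * α))) := by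
  have e : ∫⁻ b in Iic 0, gagWt α (a - b) = ∫⁻ s in Ioi a, ENNReal.ofReal (s ^ (-(1 + 2 * α))) := by
    rw [setLIntegral_congr Ioi_ae_eq_Ici, ← lintegral_indicator measurableSet_Iic,
      ← lintegral_indicator measurableSet_Ici, ← lintegral_sub_left_eq_self _ a]
    refine lintegral_congr fun s => ?_
    by_cases hs : a ≤ s
    · rw [indicator_of_mem (show a - s ∈ Iic 0 from by rw [mem_Iic]; linarith),
        indicator_of_mem (show s ∈ Ici a from hs), sub_sub_cancel, gagWt, abs_of_pos (by linarith)]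
    · rw [indicator_of_notMem (show a - s ∉ Iic 0 from by rw [mem_Iic]; linarith),
        indicator_of_notMem (show s ∉ Ici a from hs)]
  rw [e, ← ofReal_integral_eq_lintegral_ofReal (integrableOn_Ioi_rpow_of_lt (by linarith) ha),
    integral_Ioi_rpow_of_lt (by linarith) ha, ← ENNReal.ofReal_mul (by positivity)]
  · congr 1
    rw [show -(1 + 2 * α) + 1 = -(2 * α) by ring]
    field_simp
  · filter_upwards [ae_restrict_mem measurableSet_Ioi] with s hs
    exact Real.rpow_nonneg (ha.trans hs).le _

theorem gag_Iic_indicator_le {α : ℝ} (h0 : 0 < α) {u : ℝ → ℂ} (hu : Measurable u) :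
    gag α (Iic 1) ((Ioc (0:ℝ) 1).indicator u) ≤
      gag α (Ioc 0 1) u + 2 * (ENNReal.ofReal (2 * α)⁻¹ * hardyE α (Ioc 0 1) u) := by
  set w := (Ioc (0:ℝ) 1).indicator u with hw
  have hwm : Measurable w := hu.indicator measurableSet_Ioc
  set Ψ : ℝ → ℝ → ℝ≥0∞ := fun a b => ‖w a - w b‖ₑ ^ 2 * gagWt α (a - b) with hΨ
  have hm : Measurable fun p : ℝ × ℝ => Ψ p.1 p.2 := measurable_gagIntegrand α hwm
  have hm1 : ∀ S : Set ℝ, Measurable fun a => ∫⁻ b in S, Ψ a b := fun S => hm.lintegral_prod_right'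
  have w1 : ∀ x ∈ Ioc (0:ℝ) 1, w x = u x := fun x hx => indicator_of_mem hx _
  have w0 : ∀ x ∈ Iic (0:ℝ), w x = 0 := fun x hx => indicator_of_notMem (fun h => not_lt.2 hx h.1) _
  have spl : ∀ F : ℝ → ℝ≥0∞, ∫⁻ x in Iic 1, F x ≤ (∫⁻ x in Iic 0, F x) + ∫⁻ x in Ioc 0 1, F x := by
    intro F
    rw [← Iic_union_Ioc_eq_Iic (zero_le_one' ℝ)]
    exact lintegral_union_le _ _ _
  have p00 : ∫⁻ a in Iic 0, ∫⁻ b in Iic 0, Ψ a b = 0 := by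
    rw [setLIntegral_congr_fun (g := fun _ => 0) measurableSet_Iic, lintegral_zero]
    intro a ha
    simp only
    rw [setLIntegral_congr_fun (g := fun _ => 0) measurableSet_Iic, lintegral_zero]
    intro b hb
    simp only [hΨ]
    rw [w0 a ha, w0 b hb]; simp
  have p10 : ∫⁻ a in Ioc 0 1, ∫⁻ b in Iic 0, Ψ a b
      = ENNReal.ofReal (2 * α)⁻¹ * hardyE α (Ioc 0 1) u := by
    unfold hardyE
    rw [← lintegral_const_mul' _ _ ENNReal.ofReal_ne_top]
    refine setLIntegral_congr_fun measurableSet_Ioc fun a ha => ?_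
    rw [mul_left_comm, ← lintegral_gagWt_Iic h0 ha.1, ← lintegral_const_mul' _ _ (by finiteness)]
    refine setLIntegral_congr_fun measurableSet_Iic fun b hb => ?_
    simp only [hΨ]
    rw [w0 b hb, w1 a ha, sub_zero]
  have p01 : ∫⁻ a in Iic 0, ∫⁻ b in Ioc 0 1, Ψ a b
      = ENNReal.ofReal (2 * α)⁻¹ * hardyE α (Ioc 0 1) u := by
    rw [← p10, lintegral_lintegral_swap hm.aemeasurable]
    refine lintegral_congr fun a => lintegral_congr fun b => ?_
    simp only [hΨ]
    rw [enorm_sub_rev, ← gagWt_neg, neg_sub]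
  have p11 : ∫⁻ a in Ioc 0 1, ∫⁻ b in Ioc 0 1, Ψ a b = gag α (Ioc 0 1) u := by
    refine setLIntegral_congr_fun measurableSet_Ioc fun a ha => ?_
    refine setLIntegral_congr_fun measurableSet_Ioc fun b hb => ?_
    simp only [hΨ]
    rw [w1 a ha, w1 b hb]
  calc gag α (Iic 1) w ≤ ∫⁻ a in Iic 1, ((∫⁻ b in Iic 0, Ψ a b) + ∫⁻ b in Ioc 0 1, Ψ a b) :=
        lintegral_mono fun a => spl _
    _ = (∫⁻ a in Iic 1, ∫⁻ b in Iic 0, Ψ a b) + ∫⁻ a in Iic 1, ∫⁻ b in Ioc 0 1, Ψ a b :=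
        lintegral_add_left (hm1 _) _
    _ ≤ _ := add_le_add (spl _) (spl _)
    _ = _ := by rw [p00, p01, p10, p11]; ring

theorem diffEnergy_evenExt_le {α : ℝ} (h0 : 0 < α) (hα : α ≠ 1 / 2) :
    ∃ C : ℝ≥0∞, C ≠ ∞ ∧ ∀ u : ℝ → ℂ, Measurable u → hardyE α (Ioc 0 1) u ≠ ∞ →
      diffEnergy α (evenExt u) ≤ C * ((∫⁻ x in Ioc 0 1, ‖u x‖ₑ ^ 2) + gag α (Ioc 0 1) u) := by
  obtain ⟨C, hC, h⟩ := hardyE_le h0 hα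
  set D := ENNReal.ofReal (2 * α)⁻¹
  have hD : D ≠ ∞ := ENNReal.ofReal_ne_top
  refine ⟨4 * (1 + 2 * (D * C)), by finiteness, fun u hu hH => ?_⟩
  set L := ∫⁻ x in Ioc 0 1, ‖u x‖ₑ ^ 2
  set G := gag α (Ioc 0 1) u
  calc diffEnergy α (evenExt u) ≤ 2 * diffEnergy α (evenExt u) := by
        rw [two_mul]; exact le_self_add
    _ = gag α univ (evenExt u) := (gag_univ α (measurable_evenExt hu)).symm
    _ ≤ 4 * (G + 2 * (D * hardyE α (Ioc 0 1) u)) :=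
        (gag_evenExt_le_Iic h0 u).trans (mul_le_mul_right (gag_Iic_indicator_le h0 hu) _)
    _ ≤ 4 * ((L + G) + 2 * (D * (C * (L + G)))) := by
        gcongr
        · exact le_add_self
        · exact h u hu hH
    _ = _ := by ring

theorem lintegral_evenExt (u : ℝ → ℂ) :
    ∫⁻ x, ‖evenExt u x‖ₑ ^ 2 = 2 * ∫⁻ x in Ioc 0 1, ‖u x‖ₑ ^ 2 := by
  have h := lintegral_comp_foldMap (fun y => ‖(Ioc (0:ℝ) 1).indicator u y‖ₑ ^ 2)
  rw [show ∫⁻ x, ‖evenExt u x‖ₑ ^ 2 = _ from h]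
  congr 1
  rw [← lintegral_indicator measurableSet_Ioc, ← lintegral_indicator measurableSet_Iic]
  refine lintegral_congr fun x => ?_
  by_cases hx : x ∈ Ioc (0:ℝ) 1
  · rw [indicator_of_mem (show x ∈ Iic 1 from hx.2), indicator_of_mem hx, indicator_of_mem hx]
  · rw [indicator_of_notMem (s := Ioc (0:ℝ) 1) hx]
    by_cases h1 : x ∈ Iic (1:ℝ)
    · rw [indicator_of_mem h1, indicator_of_notMem hx]; simp
    · rw [indicator_of_notMem h1]

theorem evenExt_eq_zero (u : ℝ → ℂ) {x : ℝ} (hx : x ∉ Icc (0:ℝ) 2) : evenExt u x = 0 := by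
  refine indicator_of_notMem (fun h => hx ?_) _
  have := h.1
  rw [foldMap, lt_min_iff] at this
  exact ⟨this.1.le, by linarith [this.2]⟩

theorem memLp_evenExt {u : ℝ → ℂ} (hu : Measurable u) (h : ∫⁻ x in Ioc 0 1, ‖u x‖ₑ ^ 2 ≠ ∞) :
    MemLp (evenExt u) 2 := by
  rw [memLp_two_iff (measurable_evenExt hu).aestronglyMeasurable, lintegral_evenExt, lt_top_iff_ne_top]
  exact ENNReal.mul_ne_top (by norm_num) h

theorem integrable_evenExt {u : ℝ → ℂ} (hu : Measurable u) (h : ∫⁻ x in Ioc 0 1, ‖u x‖ₑ ^ 2 ≠ ∞) :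
    Integrable (evenExt u) := by
  have h1 : IntegrableOn (evenExt u) (Icc 0 2) :=
    ((memLp_evenExt hu h).restrict (Icc (0:ℝ) 2)).integrable (by norm_num)
  rwa [integrableOn_iff_integrable_of_support_subset] at h1
  intro x hx
  by_contra h
  exact hx (evenExt_eq_zero u h)

/-! ### Abel inversion and the lower bound -/

/-- The Beta value `B(α, 1 - α)`, as an extended nonnegative number. -/
noncomputable def betaConst (α : ℝ) : ℝ≥0∞ :=
  ∫⁻ r, ENNReal.ofReal (powKer (1 - α) (1 - r) * powKer α r)

theorem betaConst_eq (α : ℝ) : betaConst α =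
    ∫⁻ r in Ioo 0 1, ENNReal.ofReal (r ^ (α - 1) * (1 - r) ^ ((1 - α) - 1)) := by
  rw [betaConst, ← lintegral_indicator measurableSet_Ioo]
  refine lintegral_congr fun r => ?_
  by_cases hr : 0 < r
  · by_cases hr1 : r < 1
    · rw [indicator_of_mem (show r ∈ Ioo 0 1 from ⟨hr, hr1⟩), powKer, powKer, if_pos (by linarith),
        if_pos hr, mul_comm]
    · rw [indicator_of_notMem (fun h => hr1 h.2), powKer, if_neg (by linarith)]; simp
  · rw [indicator_of_notMem (fun h => hr h.1), mul_comm, powKer, if_neg hr]; simp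

theorem betaConst_ne_top {α : ℝ} (h0 : 0 < α) (h1 : α < 1) : betaConst α ≠ ∞ := by
  rw [betaConst_eq]
  exact ((integrableOn_beta h0 (by linarith : 0 < 1 - α)).lintegral_lt_top).ne

theorem betaConst_ne_zero (α : ℝ) : betaConst α ≠ 0 := by
  rw [betaConst_eq]
  intro h
  rw [lintegral_eq_zero_iff (by fun_prop)] at h
  have h2 : ∀ᵐ x ∂(volume.restrict (Ioo (0:ℝ) 1)), False := by
    filter_upwards [h, ae_restrict_mem measurableSet_Ioo] with x hx hx2
    have h1 : 0 < 1 - x := by linarith [hx2.2]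
    have hx0 := hx2.1
    simp only [Pi.zero_apply, ENNReal.ofReal_eq_zero] at hx
    exact absurd hx (not_le.2 (by positivity))
  rw [ae_iff] at h2
  simp at h2

/-- The kernels of orders `1 - α` and `α` convolve to a constant multiple of the Heaviside
function. -/
theorem lintegral_powKer_powKer (α x s : ℝ) :
    ∫⁻ t, ENNReal.ofReal (powKer (1 - α) (x - t) * powKer α (t - s))
      = (Iio x).indicator (fun _ => betaConst α) s := by
  by_cases h : s < x
  · have hd : 0 < x - s := by linarith
    rw [indicator_of_mem (show s ∈ Iio x from h), ← lintegral_add_right_eq_self _ s]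
    have e := lintegral_comp_mul_pos
      (fun t => ENNReal.ofReal (powKer (1 - α) (x - (t + s)) * powKer α (t + s - s))) hd
    have e2 : betaConst α = ENNReal.ofReal (x - s) * ∫⁻ r, ENNReal.ofReal
        (powKer (1 - α) (x - ((x - s) * r + s)) * powKer α ((x - s) * r + s - s)) := by
      rw [betaConst, ← lintegral_const_mul' _ _ ENNReal.ofReal_ne_top]
      refine lintegral_congr fun r => ?_
      rw [← ENNReal.ofReal_mul hd.le, show x - ((x - s) * r + s) = (x - s) * (1 - r) by ring,
        add_sub_cancel_right, powKer_mul _ hd, powKer_mul _ hd]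
      congr 1
      have : (x - s) * ((x - s) ^ (1 - α - 1) * (x - s) ^ (α - 1)) = 1 := by
        rw [← Real.rpow_add hd, show 1 - α - 1 + (α - 1) = -1 by ring, Real.rpow_neg_one,
          mul_inv_cancel₀ hd.ne']
      linear_combination -(powKer (1 - α) (1 - r) * powKer α r) * this
    rw [e2, e, ← mul_assoc, ← ENNReal.ofReal_mul hd.le, mul_inv_cancel₀ hd.ne', ENNReal.ofReal_one,
      one_mul]
  · rw [indicator_of_notMem (show s ∉ Iio x from h)]
    rw [← lintegral_zero (μ := (volume : Measure ℝ))]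
    refine lintegral_congr fun t => ?_
    by_cases ht : t < x
    · rw [mul_comm, powKer, if_neg (by linarith)]; simp
    · rw [powKer, if_neg (by linarith)]; simp

theorem integral_powKer_powKer (α x s : ℝ) :
    ∫ t, powKer (1 - α) (x - t) * powKer α (t - s)
      = (Iio x).indicator (fun _ => (betaConst α).toReal) s := by
  have m1 := measurable_powKer α
  have m2 := measurable_powKer (1 - α)
  rw [integral_eq_lintegral_of_nonneg_ae
    (Eventually.of_forall fun t => mul_nonneg (powKer_nonneg _ _) (powKer_nonneg _ _))
    (Measurable.aestronglyMeasurable (by fun_prop)), lintegral_powKer_powKer]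
  by_cases h : s ∈ Iio x
  · rw [indicator_of_mem h, indicator_of_mem h]
  · rw [indicator_of_notMem h, indicator_of_notMem h]; rfl

/-- Joint integrability justifying the exchange of integrals in the Abel inversion. -/
theorem integrable_triple {α : ℝ} (h0 : 0 < α) (h1 : α < 1) {g : ℝ → ℂ} (hg : Measurable g)
    (hi : Integrable g) (x : ℝ) :
    Integrable (fun p : ℝ × ℝ => (powKer (1 - α) (x - p.1) : ℂ) * ((powKer α (p.1 - p.2) : ℂ) * g p.2))
      (volume.prod volume) := by
  have m2 := measurable_powKer (1 - α)
  have m1 := measurable_powKer α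
  have hm : Measurable fun p : ℝ × ℝ =>
      (powKer (1 - α) (x - p.1) : ℂ) * ((powKer α (p.1 - p.2) : ℂ) * g p.2) := by fun_prop
  refine ⟨hm.aestronglyMeasurable, ?_⟩
  have e : ∀ t s, ‖(powKer (1 - α) (x - t) : ℂ) * ((powKer α (t - s) : ℂ) * g s)‖ₑ
      = ENNReal.ofReal (powKer (1 - α) (x - t) * powKer α (t - s)) * ‖g s‖ₑ := by
    intro t s
    rw [← mul_assoc, enorm_mul, ← Complex.ofReal_mul, ← ofReal_norm, Complex.norm_real,
      Real.norm_of_nonneg (mul_nonneg (powKer_nonneg _ _) (powKer_nonneg _ _))]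
  rw [HasFiniteIntegral, lintegral_prod_symm _ hm.enorm.aemeasurable]
  simp only [e]
  calc _ = ∫⁻ s, (Iio x).indicator (fun _ => betaConst α) s * ‖g s‖ₑ := by
        refine lintegral_congr fun s => ?_
        rw [lintegral_mul_const _ (by fun_prop), lintegral_powKer_powKer]
    _ ≤ ∫⁻ s, betaConst α * ‖g s‖ₑ := by
        refine lintegral_mono fun s => mul_le_mul_left ?_ _
        exact indicator_le_self' (fun _ _ => zero_le) s
    _ = betaConst α * ∫⁻ s, ‖g s‖ₑ := lintegral_const_mul' _ _ (betaConst_ne_top h0 h1)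
    _ < ∞ := ENNReal.mul_lt_top (betaConst_ne_top h0 h1).lt_top hi.2

theorem integrable_powKer_rlConv {α : ℝ} (h0 : 0 < α) (h1 : α < 1) {g : ℝ → ℂ} (hg : Measurable g)
    (hi : Integrable g) (x : ℝ) :
    Integrable fun t => (powKer (1 - α) (x - t) : ℂ) * rlConv α g t := by
  have := (integrable_triple h0 h1 hg hi x).integral_prod_left
  refine this.congr (Eventually.of_forall fun t => ?_)
  exact integral_const_mul (powKer (1 - α) (x - t) : ℂ) fun s => (powKer α (t - s) : ℂ) * g s

/-- Abel inversion: the integral of order `1 - α` of the integral of order `α` is, up to a constant,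
the primitive. -/
theorem integral_powKer_rlConv {α : ℝ} (h0 : 0 < α) (h1 : α < 1) {g : ℝ → ℂ} (hg : Measurable g)
    (hi : Integrable g) (x : ℝ) :
    ∫ t, (powKer (1 - α) (x - t) : ℂ) * rlConv α g t
      = ((betaConst α).toReal : ℂ) * ∫ s in Iic x, g s := by
  calc _ = ∫ t, ∫ s, (powKer (1 - α) (x - t) : ℂ) * ((powKer α (t - s) : ℂ) * g s) :=
        integral_congr_ae (Eventually.of_forall fun t => (integral_const_mul _ _).symm)
    _ = ∫ s, ∫ t, (powKer (1 - α) (x - t) : ℂ) * ((powKer α (t - s) : ℂ) * g s) :=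
        integral_integral_swap (integrable_triple h0 h1 hg hi x)
    _ = ∫ s, (Iio x).indicator (fun s => ((betaConst α).toReal : ℂ) * g s) s := by
        refine integral_congr_ae (Eventually.of_forall fun s => ?_)
        simp only [← mul_assoc]
        rw [integral_mul_const]
        have := congrArg Complex.ofReal (integral_powKer_powKer α x s)
        rw [← integral_complex_ofReal] at this
        simp only [Complex.ofReal_mul] at this
        rw [this]
        by_cases h : s ∈ Iio x
        · rw [indicator_of_mem h, indicator_of_mem h]
        · rw [indicator_of_notMem h, indicator_of_notMem h]; simp
    _ = _ := by
        rw [integral_indicator measurableSet_Iio, integral_const_mul, ← integral_Iic_eq_integral_Iio]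

theorem rlConv_eq_zero (α : ℝ) {g : ℝ → ℂ} (hz : ∀ x ≤ 0, g x = 0) {x : ℝ} (hx : x ≤ 0) :
    rlConv α g x = 0 := by
  unfold rlConv
  rw [← integral_zero ℝ ℂ]
  refine integral_congr_ae (Eventually.of_forall fun t => ?_)
  rcases le_or_gt t 0 with h | h
  · simp [hz t h]
  · simp only [powKer]; rw [if_neg (by linarith)]; simp

/-- For `x < 1` the kernel only sees `t < x`, where the extension coincides with `rlConv α g`; Abel
inversion then gives an integral of `g` over a short interval. -/
theorem conv_diffKer_evenExt {α : ℝ} (h0 : 0 < α) (h1 : α < 1) {g : ℝ → ℂ} (hg : Measurable g)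
    (hi : Integrable g) (hz : ∀ x ≤ 0, g x = 0) {ε x : ℝ} (hε : 0 < ε) (hx : x < 1) :
    ∫ t, (diffKer (1 - α) ε (x - t) : ℂ) * evenExt (rlConv α g) t
      = ((betaConst α).toReal : ℂ) * ∫ s in (x - ε)..x, g s := by
  calc _ = ∫ t, ((powKer (1 - α) (x - t) : ℂ) * rlConv α g t
          - (powKer (1 - α) (x - ε - t) : ℂ) * rlConv α g t) := by
        refine integral_congr_ae (Eventually.of_forall fun t => ?_)
        simp only [diffKer]
        rw [← sub_mul, show x - t - ε = x - ε - t by ring, Complex.ofReal_sub]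
        rcases lt_or_ge t x with h | h
        · congr 1
          unfold evenExt foldMap
          rw [min_eq_left (by linarith)]
          by_cases h2 : 0 < t
          · exact indicator_of_mem (show t ∈ Ioc 0 1 from ⟨h2, by linarith⟩) _
          · rw [indicator_of_notMem (fun h => h2 h.1), rlConv_eq_zero α hz (not_lt.1 h2)]
        · unfold powKer
          rw [if_neg (by linarith), if_neg (by linarith)]; simp
    _ = _ := by
        rw [integral_sub (integrable_powKer_rlConv h0 h1 hg hi x)
          (integrable_powKer_rlConv h0 h1 hg hi (x - ε)), integral_powKer_rlConv h0 h1 hg hi,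
          integral_powKer_rlConv h0 h1 hg hi, ← mul_sub,
          intervalIntegral.integral_Iic_sub_Iic hi.integrableOn hi.integrableOn]

/-- Recovery of `g` from the energy of its extended fractional integral: difference quotients of the
primitive of `g` are bounded in `L²` uniformly in the step, and converge to `g` almost everywhere. -/
theorem lintegral_sq_le_diffEnergy {α : ℝ} (h0 : 0 < α) (h1 : α < 1) :
    ∃ C : ℝ≥0∞, C ≠ ∞ ∧ ∀ g : ℝ → ℂ, Measurable g → Integrable g → (∀ x ≤ 0, g x = 0) →
      ∫⁻ x in Ioc 0 1, ‖rlConv α g x‖ₑ ^ 2 ≠ ∞ →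
      ∫⁻ x in Ioo 0 1, ‖g x‖ₑ ^ 2 ≤ C * diffEnergy α (evenExt (rlConv α g)) := by
  obtain ⟨C, hC, hb⟩ := conv_diffKer_le_diffEnergy h0 h1
  have hB := betaConst_ne_zero α
  have hB' := betaConst_ne_top h0 h1
  refine ⟨(betaConst α ^ 2)⁻¹ * C,
    ENNReal.mul_ne_top (ENNReal.inv_ne_top.2 (pow_ne_zero 2 hB)) hC, fun g hg hi hz hL => ?_⟩
  set v := evenExt (rlConv α g) with hv
  have hU := (stronglyMeasurable_rlConv α hg).measurable
  set ε : ℕ → ℝ := fun n => 1 / ((n:ℝ) + 1) with hε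
  have hεp : ∀ n, 0 < ε n := fun n => by positivity
  set P : ℝ → ℂ := fun y => ∫ t in (0:ℝ)..y, g t with hP
  have hPc : Continuous P := intervalIntegral.continuous_primitive (fun a b => hi.intervalIntegrable) 0
  set F : ℕ → ℝ → ℂ := fun n x => (-(ε n))⁻¹ • (P (x + -(ε n)) - P x) with hF
  have hFm : ∀ n, Measurable fun x => ‖F n x‖ₑ ^ 2 := fun n => by
    have := hPc.measurable; fun_prop
  have hlim : ∀ᵐ x, Tendsto (fun n => ‖F n x‖ₑ ^ 2) atTop (𝓝 (‖g x‖ₑ ^ 2)) := by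
    filter_upwards [LocallyIntegrable.ae_hasDerivAt_integral hi.locallyIntegrable] with x hx
    have h := (hx 0).tendsto_slope_zero
    have ht : Tendsto (fun n => -(ε n)) atTop (𝓝[≠] 0) := by
      refine tendsto_nhdsWithin_iff.2 ⟨?_, Eventually.of_forall fun n => ?_⟩
      · simpa [hε] using (tendsto_one_div_add_atTop_nhds_zero_nat (𝕜 := ℝ)).neg
      · exact neg_ne_zero.2 (hεp n).ne'
    exact ((ENNReal.continuous_pow 2).tendsto _).comp ((continuous_enorm.tendsto _).comp (h.comp ht))
  have key : ∀ n, betaConst α ^ 2 * ∫⁻ x in Ioo 0 1, ‖F n x‖ₑ ^ 2 ≤ C * diffEnergy α v := by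
    intro n
    have hbn := hb v (measurable_evenExt hU) (integrable_evenExt hU hL) (memLp_evenExt hU hL) (ε n) (hεp n)
    have e : ∀ x ∈ Ioo (0:ℝ) 1, betaConst α ^ 2 * ‖F n x‖ₑ ^ 2 =
        ENNReal.ofReal ((ε n)⁻¹ ^ 2) * ‖∫ t, (diffKer (1 - α) (ε n) (x - t) : ℂ) * v t‖ₑ ^ 2 := by
      intro x hx
      rw [hv, conv_diffKer_evenExt h0 h1 hg hi hz (hεp n) hx.2]
      have e1 : F n x = ((ε n)⁻¹ : ℝ) • ∫ s in (x - ε n)..x, g s := by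
        simp only [hF, hP]
        rw [← intervalIntegral.integral_interval_sub_left (hi.intervalIntegrable (a := 0) (b := x))
          (hi.intervalIntegrable (a := 0) (b := x - ε n)), inv_neg, neg_smul, ← smul_neg, neg_sub, ← sub_eq_add_neg]
      have e2 : ‖((betaConst α).toReal : ℂ)‖ₑ = betaConst α := by
        rw [← ofReal_norm, Complex.norm_real, Real.norm_of_nonneg ENNReal.toReal_nonneg,
          ENNReal.ofReal_toReal hB']
      have e3 : ‖(ε n)⁻¹‖ₑ = ENNReal.ofReal (ε n)⁻¹ := by
        rw [← ofReal_norm, Real.norm_of_nonneg (inv_nonneg.2 (hεp n).le)]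
      rw [e1, enorm_smul, enorm_mul, e2, e3, ENNReal.ofReal_pow (inv_nonneg.2 (hεp n).le)]
      ring
    rw [← lintegral_const_mul' _ _ (ENNReal.pow_ne_top hB'), setLIntegral_congr_fun measurableSet_Ioo e,
      lintegral_const_mul' _ _ ENNReal.ofReal_ne_top]
    calc _ ≤ ENNReal.ofReal ((ε n)⁻¹ ^ 2) * (C * ENNReal.ofReal (ε n ^ 2) * diffEnergy α v) :=
          mul_le_mul_right ((setLIntegral_le_lintegral _ _).trans hbn) _
      _ = (ENNReal.ofReal ((ε n)⁻¹ ^ 2) * ENNReal.ofReal (ε n ^ 2)) * (C * diffEnergy α v) := by ring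
      _ = _ := by
          rw [← ENNReal.ofReal_mul (by positivity), ← mul_pow, inv_mul_cancel₀ (hεp n).ne']; simp
  have hBi : (betaConst α ^ 2)⁻¹ * betaConst α ^ 2 = 1 :=
    ENNReal.inv_mul_cancel (pow_ne_zero 2 hB) (ENNReal.pow_ne_top hB')
  calc ∫⁻ x in Ioo 0 1, ‖g x‖ₑ ^ 2 = ∫⁻ x in Ioo 0 1, liminf (fun n => ‖F n x‖ₑ ^ 2) atTop := by
        refine lintegral_congr_ae (ae_restrict_of_ae ?_)
        filter_upwards [hlim] with x hx
        exact hx.liminf_eq.symm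
    _ ≤ liminf (fun n => ∫⁻ x in Ioo 0 1, ‖F n x‖ₑ ^ 2) atTop := lintegral_liminf_le hFm
    _ ≤ liminf (fun _ : ℕ => (betaConst α ^ 2)⁻¹ * C * diffEnergy α v) atTop := by
        refine liminf_le_liminf (Eventually.of_forall fun n => ?_)
        calc ∫⁻ x in Ioo 0 1, ‖F n x‖ₑ ^ 2
            = (betaConst α ^ 2)⁻¹ * (betaConst α ^ 2 * ∫⁻ x in Ioo 0 1, ‖F n x‖ₑ ^ 2) := by
              rw [← mul_assoc, hBi, one_mul]
          _ ≤ _ := by rw [mul_assoc]; exact mul_le_mul_right (key n) _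
    _ = _ := by simp

/-! ### Norm equivalence -/

/-- Norm equivalence in extended nonnegative form, for a Borel function vanishing outside `(0, 1]`. -/
theorem rlConv_equiv {α : ℝ} (h0 : 0 < α) (h1 : α < 1) (hα : α ≠ 1 / 2) :
    ∃ C : ℝ≥0∞, C ≠ ∞ ∧ ∀ g : ℝ → ℂ, Measurable g → (∀ x ∉ Ioc (0:ℝ) 1, g x = 0) →
      ∫⁻ x in Ioc 0 1, ‖g x‖ₑ ^ 2 ≠ ∞ →
      (∫⁻ x in Ioc 0 1, ‖rlConv α g x‖ₑ ^ 2) + gag α (Ioc 0 1) (rlConv α g)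
          ≤ C * ∫⁻ x in Ioc 0 1, ‖g x‖ₑ ^ 2 ∧
      ∫⁻ x in Ioc 0 1, ‖g x‖ₑ ^ 2
          ≤ C * ((∫⁻ x in Ioc 0 1, ‖rlConv α g x‖ₑ ^ 2) + gag α (Ioc 0 1) (rlConv α g)) := by
  obtain ⟨C1, hC1, b1⟩ := diffEnergy_rlConv_le h0 h1
  obtain ⟨C2, hC2, b2⟩ := hardyE_rlConv_le h0
  obtain ⟨C3, hC3, b3⟩ := diffEnergy_evenExt_le h0 hα
  obtain ⟨C4, hC4, b4⟩ := lintegral_sq_le_diffEnergy h0 h1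
  refine ⟨C2 + 2 * C1 + C4 * C3, by finiteness, fun g hg hz hG => ?_⟩
  have hz0 : ∀ x ≤ 0, g x = 0 := fun x hx => hz x fun h => absurd h.1 (not_lt.2 hx)
  have eG : ∫⁻ x, ‖g x‖ₑ ^ 2 = ∫⁻ x in Ioc 0 1, ‖g x‖ₑ ^ 2 := by
    rw [← lintegral_indicator measurableSet_Ioc]
    refine lintegral_congr fun x => ?_
    by_cases hx : x ∈ Ioc (0:ℝ) 1
    · rw [indicator_of_mem hx]
    · rw [indicator_of_notMem hx, hz x hx]; simp
  have h2 : MemLp g 2 := by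
    rw [memLp_two_iff hg.aestronglyMeasurable, eG]; exact hG.lt_top
  have hi : Integrable g := by
    have h1 : IntegrableOn g (Ioc 0 1) := (h2.restrict (Ioc (0:ℝ) 1)).integrable (by norm_num)
    rwa [integrableOn_iff_integrable_of_support_subset] at h1
    intro x hx
    by_contra h
    exact hx (hz x h)
  have hU := (stronglyMeasurable_rlConv α hg).measurable
  have cH : hardyE α (Ioc 0 1) (rlConv α g) ≤ C2 * ∫⁻ x in Ioc 0 1, ‖g x‖ₑ ^ 2 := by
    rw [← eG]
    exact (hardyE_mono α Ioc_subset_Ioi_self _).trans (b2 g hg hz0)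
  have cL : ∫⁻ x in Ioc 0 1, ‖rlConv α g x‖ₑ ^ 2 ≤ hardyE α (Ioc 0 1) (rlConv α g) := by
    refine setLIntegral_mono' measurableSet_Ioc fun x hx => ?_
    refine le_mul_of_one_le_right zero_le (ENNReal.one_le_ofReal.2 ?_)
    exact Real.one_le_rpow_of_pos_of_le_one_of_nonpos hx.1 hx.2 (by linarith)
  have cG : gag α (Ioc 0 1) (rlConv α g) ≤ 2 * C1 * ∫⁻ x in Ioc 0 1, ‖g x‖ₑ ^ 2 := by
    rw [← eG, mul_assoc]
    refine (gag_mono α (subset_univ _) _).trans ?_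
    rw [gag_univ α hU]
    exact mul_le_mul_right (b1 g hg hi h2) _
  have hHt : hardyE α (Ioc 0 1) (rlConv α g) ≠ ∞ := ne_top_of_le_ne_top (ENNReal.mul_ne_top hC2 hG) cH
  constructor
  · refine (add_le_add (cL.trans cH) cG).trans ?_
    rw [← add_mul]
    exact mul_le_mul_left le_self_add _
  · rw [setLIntegral_congr Ioo_ae_eq_Ioc.symm]
    refine (b4 g hg hi hz0 (ne_top_of_le_ne_top hHt cL)).trans ?_
    refine (mul_le_mul_right (b3 _ hU hHt) _).trans ?_
    rw [← mul_assoc]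
    exact mul_le_mul_left le_add_self _

theorem L2normSq_eq {w : ℝ → ℂ} (hw : AEStronglyMeasurable w (volume.restrict (Ioc 0 1))) :
    L2normSq w = (∫⁻ x in Ioc 0 1, ‖w x‖ₑ ^ 2).toReal := by
  rw [L2normSq, intervalIntegral.integral_of_le zero_le_one,
    integral_eq_lintegral_of_nonneg_ae (f := fun x => ‖w x‖ ^ 2)
      (Eventually.of_forall fun x => by positivity) (hw.norm.pow 2)]
  congr 1
  refine lintegral_congr fun x => ?_
  rw [ENNReal.ofReal_pow (norm_nonneg _), ofReal_norm]

/-- The iterated Bochner integral is the genuine Gagliardo energy once the latter is finite; otherwise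
it could take the default value of a non-integrable function. -/
theorem sobSeminormSq_eq (s : ℝ) {w : ℝ → ℂ} (hw : Measurable w) (h : gag s (Ioc 0 1) w ≠ ∞) :
    sobSeminormSq s w = (gag s (Ioc 0 1) w).toReal := by
  unfold sobSeminormSq
  have hm := measurable_gagIntegrand s hw
  rw [intervalIntegral.integral_of_le zero_le_one]
  have e : ∀ x, ∫ y in (0:ℝ)..1, ‖w x - w y‖ ^ 2 / |x - y| ^ (1 + 2 * s)
      = (∫⁻ y in Ioc 0 1, ‖w x - w y‖ₑ ^ 2 * gagWt s (x - y)).toReal := by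
    intro x
    rw [intervalIntegral.integral_of_le zero_le_one,
      integral_eq_lintegral_of_nonneg_ae (Eventually.of_forall fun y => by positivity)
        (Measurable.aestronglyMeasurable (by fun_prop))]
    congr 1
    refine lintegral_congr fun y => ?_
    rw [div_eq_mul_inv, ← Real.rpow_neg (abs_nonneg _), ENNReal.ofReal_mul (by positivity),
      ENNReal.ofReal_pow (norm_nonneg _), ofReal_norm]
    rfl
  simp only [e]
  have hm2 : Measurable fun x => ∫⁻ y in Ioc 0 1, ‖w x - w y‖ₑ ^ 2 * gagWt s (x - y) :=
    hm.lintegral_prod_right'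
  exact integral_toReal hm2.aemeasurable (ae_lt_top hm2 h)

/-- The fractional integral depends on `f` only through its class almost everywhere, so that it may be
computed with a Borel representative extended by zero. -/
theorem fracInt_eq {α : ℝ} (h0 : 0 < α) {f g : ℝ → ℂ}
    (hfg : ∀ᵐ x ∂(volume.restrict (Ioc (0:ℝ) 1)), f x = g x) (hz : ∀ x ∉ Ioc (0:ℝ) 1, g x = 0)
    {x : ℝ} (hx : x ∈ Ioc (0:ℝ) 1) :
    fracInt α f x = ((Real.Gamma α)⁻¹ : ℝ) • rlConv α g x := by
  rw [fracInt, if_neg h0.ne']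
  congr 1
  rw [intervalIntegral.integral_of_le hx.1.le, rlConv, ← integral_indicator measurableSet_Ioc]
  rw [ae_restrict_iff' measurableSet_Ioc] at hfg
  refine integral_congr_ae ?_
  filter_upwards [hfg, compl_mem_ae_iff.2 (measure_singleton x)] with t ht htx
  have htx : t ≠ x := htx
  by_cases h : t ∈ Ioc 0 x
  · have hlt : t < x := lt_of_le_of_ne h.2 htx
    rw [indicator_of_mem h, powKer, if_pos (by linarith), ht ⟨h.1, h.2.trans hx.2⟩]
  · rw [indicator_of_notMem h]
    by_cases h3 : 0 < t
    · have : x < t := by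
        by_contra h4
        exact h ⟨h3, not_lt.1 h4⟩
      rw [powKer, if_neg (by linarith)]; simp
    · rw [hz t fun h => h3 h.1, mul_zero]

theorem sobNormSq_congr (s : ℝ) {u w : ℝ → ℂ} (h : ∀ x ∈ Ioc (0:ℝ) 1, u x = w x) :
    sobNormSq s u = sobNormSq s w := by
  have h' : ∀ x ∈ Set.uIoc (0:ℝ) 1, u x = w x := fun x hx => h x (by rwa [uIoc_of_le zero_le_one] at hx)
  unfold sobNormSq L2normSq sobSeminormSq
  congr 1
  · refine intervalIntegral.integral_congr_ae (Eventually.of_forall fun x hx => ?_)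
    rw [h' x hx]
  · refine intervalIntegral.integral_congr_ae (Eventually.of_forall fun x hx => ?_)
    refine intervalIntegral.integral_congr_ae (Eventually.of_forall fun y hy => ?_)
    rw [h' x hx, h' y hy]

theorem gag_smul (α c : ℝ) (S : Set ℝ) (u : ℝ → ℂ) :
    gag α S (fun x => c • u x) = ‖c‖ₑ ^ 2 * gag α S u := by
  unfold gag
  rw [← lintegral_const_mul' _ _ (by finiteness)]
  refine lintegral_congr fun x => ?_
  rw [← lintegral_const_mul' _ _ (by finiteness)]
  refine lintegral_congr fun y => ?_
  rw [← smul_sub, enorm_smul, mul_pow, mul_assoc]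

/-- for a in (0,1), a different from 1/2, the map f -> I^a f is a
norm-equivalence between L2(0,1) and its image equipped with the H^a(0,1) norm. -/
theorem statement_16 (α : ℝ) (hα : α ∈ Set.Ioo (0:ℝ) 1) (hα2 : α ≠ 1 / 2) :
    ∃ C > (0:ℝ), ∀ f : ℝ → ℂ, SqIntOn f →
      C⁻¹ * Real.sqrt (sobNormSq α (fracInt α f)) ≤ Real.sqrt (L2normSq f) ∧
      Real.sqrt (L2normSq f) ≤ C * Real.sqrt (sobNormSq α (fracInt α f)) := by
  obtain ⟨h0, h1⟩ := hα
  obtain ⟨C, hC, hb⟩ := rlConv_equiv h0 h1 hα2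
  set c : ℝ := (Real.Gamma α)⁻¹ with hc
  have hcp : 0 < c := inv_pos.2 (Real.Gamma_pos_of_pos h0)
  set M : ℝ := c ^ 2 * C.toReal + C.toReal * (c ^ 2)⁻¹ + 1 with hM
  have hCr : 0 ≤ C.toReal := ENNReal.toReal_nonneg
  have hMp : 0 < M := by positivity
  have hKp : 0 < Real.sqrt M := Real.sqrt_pos.2 hMp
  refine ⟨Real.sqrt M, hKp, fun f hf => ?_⟩
  set g : ℝ → ℂ := (Ioc (0:ℝ) 1).indicator (hf.1.mk f) with hg
  have hgm : Measurable g := hf.1.stronglyMeasurable_mk.measurable.indicator measurableSet_Ioc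
  have hgz : ∀ x ∉ Ioc (0:ℝ) 1, g x = 0 := fun x hx => indicator_of_notMem hx _
  have hfg : ∀ᵐ x ∂(volume.restrict (Ioc (0:ℝ) 1)), f x = g x := by
    filter_upwards [hf.1.ae_eq_mk, ae_restrict_mem measurableSet_Ioc] with x hx hx2
    rw [hx, hg, indicator_of_mem hx2]
  have hL : ∫⁻ x in Ioc 0 1, ‖f x‖ₑ ^ 2 = ∫⁻ x in Ioc 0 1, ‖g x‖ₑ ^ 2 :=
    lintegral_congr_ae (by filter_upwards [hfg] with x hx; rw [hx])
  have hGfin : ∫⁻ x in Ioc 0 1, ‖g x‖ₑ ^ 2 ≠ ∞ := by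
    rw [← hL]
    have := hf.2.2
    rw [HasFiniteIntegral] at this
    refine ne_of_lt (lt_of_le_of_lt (le_of_eq ?_) this)
    refine lintegral_congr fun x => ?_
    rw [enorm_pow, enorm_norm]
  obtain ⟨bu, bl⟩ := hb g hgm hgz hGfin
  set G := ∫⁻ x in Ioc 0 1, ‖g x‖ₑ ^ 2 with hG
  set L := ∫⁻ x in Ioc 0 1, ‖rlConv α g x‖ₑ ^ 2 with hLd
  set S := gag α (Ioc 0 1) (rlConv α g) with hS
  have hNfin : L + S ≠ ∞ := ne_top_of_le_ne_top (ENNReal.mul_ne_top hC hGfin) bu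
  obtain ⟨hLf, hSf⟩ := ENNReal.add_ne_top.1 hNfin
  have hU := (stronglyMeasurable_rlConv α hgm).measurable
  have hwm : Measurable fun x => c • rlConv α g x := hU.const_smul c
  have e1 : L2normSq f = G.toReal := by rw [L2normSq_eq hf.1, hL]
  have ec : (‖c‖ₑ ^ 2).toReal = c ^ 2 := by
    rw [ENNReal.toReal_pow, toReal_enorm, Real.norm_of_nonneg hcp.le]
  have e2 : sobNormSq α (fracInt α f) = c ^ 2 * (L + S).toReal := by
    rw [sobNormSq_congr α (w := fun x => c • rlConv α g x) fun x hx => fracInt_eq h0 hfg hgz hx,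
      sobNormSq, L2normSq_eq hwm.aestronglyMeasurable, sobSeminormSq_eq α hwm
        (by rw [gag_smul]; exact ENNReal.mul_ne_top (by finiteness) hSf), gag_smul,
      ENNReal.toReal_mul, ec, ENNReal.toReal_add hLf hSf, mul_add]
    congr 1
    simp only [enorm_smul, mul_pow]
    rw [lintegral_const_mul' _ _ (by finiteness), ENNReal.toReal_mul, ec]
  have ru : (L + S).toReal ≤ C.toReal * G.toReal := by
    rw [← ENNReal.toReal_mul]
    exact ENNReal.toReal_mono (ENNReal.mul_ne_top hC hGfin) bu
  have rl : G.toReal ≤ C.toReal * (L + S).toReal := by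
    rw [← ENNReal.toReal_mul]
    exact ENNReal.toReal_mono (ENNReal.mul_ne_top hC hNfin) bl
  rw [e1, e2]
  set G' := G.toReal
  set N' := (L + S).toReal
  have hG0 : 0 ≤ G' := ENNReal.toReal_nonneg
  have hN0 : 0 ≤ N' := ENNReal.toReal_nonneg
  have i1 : c ^ 2 * N' ≤ M * G' := by
    calc c ^ 2 * N' ≤ c ^ 2 * (C.toReal * G') := by gcongr
      _ = c ^ 2 * C.toReal * G' := by ring
      _ ≤ M * G' := by
          gcongr
          have : 0 ≤ C.toReal * (c ^ 2)⁻¹ := by positivity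
          linarith
  have i2 : G' ≤ M * (c ^ 2 * N') := by
    calc G' ≤ C.toReal * N' := rl
      _ = C.toReal * (c ^ 2)⁻¹ * (c ^ 2 * N') := by field_simp
      _ ≤ M * (c ^ 2 * N') := by
          gcongr
          have : 0 ≤ c ^ 2 * C.toReal := by positivity
          linarith
  constructor
  · rw [inv_mul_le_iff₀ hKp, ← Real.sqrt_mul hMp.le]
    exact Real.sqrt_le_sqrt i1
  · rw [← Real.sqrt_mul hMp.le]
    exact Real.sqrt_le_sqrt i2
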